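/- Let p₀,p₁,p₂,p₃ ∈ ℝ³ span a small simplex S that contains its own circumcenter, with edge lengths y₁ = |p₀−p₁|, y₂ = |p₀−p₂|, y₃ = |p₀−p₃|, y₄ = |p₂−p₃|, y₅ = |p₁−p₃|, y₆ = |p₁−p₂|. Write L = [2.51, 2√2] and I = [2, 2.51]. Suppose one of the following holds: (1) y₁,y₅ ∈ L and y₂,y₃,y₄,y₆ ∈ I; (2) y₁,y₅,y₆ ∈ L and y₂,y₃,y₄ ∈ I; (3) y₄,y₅ ∈ L and y₁,y₂,y₃,y₆ ∈ I; (4) y₄,y₅,y₆ ∈ L and y₁,y₂,y₃ ∈ I. Then vor(S) < 0. -/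

import Mathlib

open MeasureTheory Real

noncomputable section

abbrev E3 : Type := EuclideanSpace ℝ (Fin 3)

/-- The density of the regular octahedron. -/
def δoct : ℝ := (-3 * π + 12 * arccos (1 / Real.sqrt 3)) / Real.sqrt 8

/-- The circumradius `η(a,b,c)` of a triangle with side lengths `a`, `b`, `c`. -/
def eta (a b c : ℝ) : ℝ :=
  a * b * c / Real.sqrt ((a + b + c) * (b + c - a) * (a + c - b) * (a + b - c))

/-- A simplex is small if all six edge lengths are at least `2` and each of the
four triangular faces has circumradius at most `√2`. -/
def IsSmall (p₀ p₁ p₂ p₃ : E3) : Prop :=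
  (2 ≤ dist p₀ p₁ ∧ 2 ≤ dist p₀ p₂ ∧ 2 ≤ dist p₀ p₃ ∧
    2 ≤ dist p₁ p₂ ∧ 2 ≤ dist p₁ p₃ ∧ 2 ≤ dist p₂ p₃) ∧
  eta (dist p₀ p₁) (dist p₀ p₂) (dist p₁ p₂) ≤ Real.sqrt 2 ∧
  eta (dist p₀ p₁) (dist p₀ p₃) (dist p₁ p₃) ≤ Real.sqrt 2 ∧
  eta (dist p₀ p₂) (dist p₀ p₃) (dist p₂ p₃) ≤ Real.sqrt 2 ∧
  eta (dist p₁ p₂) (dist p₁ p₃) (dist p₂ p₃) ≤ Real.sqrt 2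

/-- `S = conv {p₀, p₁, p₂, p₃}` contains its own circumcenter. -/
def ContainsCircumcenter (p₀ p₁ p₂ p₃ : E3) : Prop :=
  ∃ c ∈ convexHull ℝ ({p₀, p₁, p₂, p₃} : Set E3),
    dist c p₀ = dist c p₁ ∧ dist c p₀ = dist c p₂ ∧ dist c p₀ = dist c p₃

/-- The Voronoi score of the simplex `S = conv {p₀, p₁, p₂, p₃}` at the vertex `p₀`:
`vor(S) = 4·(-δ_oct · vol {x ∈ S : |x-p₀| ≤ |x-pⱼ|, j = 1,2,3} + vol (B(p₀,1) ∩ C(S)))`,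
where `C(S)` is the cone over `S` with apex `p₀`. -/
def vor (p₀ p₁ p₂ p₃ : E3) : ℝ :=
  4 * (-δoct * (volume {x ∈ convexHull ℝ ({p₀, p₁, p₂, p₃} : Set E3) |
        dist x p₀ ≤ dist x p₁ ∧ dist x p₀ ≤ dist x p₂ ∧ dist x p₀ ≤ dist x p₃}).toReal +
      (volume (Metric.closedBall p₀ 1 ∩
        {y : E3 | ∃ x ∈ convexHull ℝ ({p₀, p₁, p₂, p₃} : Set E3), ∃ t : ℝ, 0 ≤ t ∧
          y = p₀ + t • (x - p₀)})).toReal)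

open scoped Pointwise in
lemma vol_radial (Ω : Set (ℝ × ℝ)) (hΩ : MeasurableSet Ω) (ρ : ℝ × ℝ → ℝ) (hρ : Measurable ρ)
    (hρ0 : ∀ x ∈ Ω, 0 ≤ ρ x) :
    volume {p : ℝ × ℝ × ℝ | 0 < p.1 ∧ (p.1⁻¹ • p.2) ∈ Ω ∧ p.1 ≤ ρ (p.1⁻¹ • p.2)} =
      ∫⁻ x in Ω, ENNReal.ofReal (ρ x ^ 3 / 3) := by
  have hm : Measurable (fun p : ℝ × ℝ × ℝ => p.1⁻¹ • p.2) :=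
    (measurable_fst.inv).smul measurable_snd
  have hmeas : MeasurableSet {p : ℝ × ℝ × ℝ | 0 < p.1 ∧ (p.1⁻¹ • p.2) ∈ Ω ∧
      p.1 ≤ ρ (p.1⁻¹ • p.2)} := by
    refine (measurableSet_lt measurable_const measurable_fst).inter
      ((hm hΩ).inter (measurableSet_le measurable_fst (hρ.comp hm)))
  rw [Measure.volume_eq_prod, Measure.prod_apply hmeas]
  have hslice : ∀ r : ℝ, volume (Prod.mk r ⁻¹' {p : ℝ × ℝ × ℝ | 0 < p.1 ∧ (p.1⁻¹ • p.2) ∈ Ω ∧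
      p.1 ≤ ρ (p.1⁻¹ • p.2)}) =
      ∫⁻ x in Ω, (Set.Ioc 0 (ρ x)).indicator (fun r => ENNReal.ofReal (r ^ 2)) r := by
    intro r
    by_cases hr : 0 < r
    · have hset : Prod.mk r ⁻¹' {p : ℝ × ℝ × ℝ | 0 < p.1 ∧ (p.1⁻¹ • p.2) ∈ Ω ∧
          p.1 ≤ ρ (p.1⁻¹ • p.2)} = r • {x | x ∈ Ω ∧ r ≤ ρ x} := by
        ext x
        rw [Set.mem_smul_set_iff_inv_smul_mem₀ hr.ne']
        simp [hr]
      have hms : MeasurableSet {x | r ≤ ρ x} := measurableSet_le measurable_const hρ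
      rw [hset, Measure.addHaar_smul]
      have : (fun x => (Set.Ioc 0 (ρ x)).indicator (fun r => ENNReal.ofReal (r ^ 2)) r) =
          Set.indicator {x | r ≤ ρ x} (fun _ => ENNReal.ofReal (r ^ 2)) := by
        funext x
        by_cases h : r ≤ ρ x
        · simp [h, hr]
        · simp [h]
      rw [this, lintegral_indicator hms, Measure.restrict_restrict hms, setLIntegral_const]
      congr 1
      · simp [Module.finrank_prod]
      · congr 1
        ext x; simp [and_comm]
    · have h0 : Prod.mk r ⁻¹' {p : ℝ × ℝ × ℝ | 0 < p.1 ∧ (p.1⁻¹ • p.2) ∈ Ω ∧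
          p.1 ≤ ρ (p.1⁻¹ • p.2)} = ∅ := by
        ext x; simp [hr]
      rw [h0]
      simp [hr]
  simp_rw [hslice]
  rw [lintegral_lintegral_swap]
  · refine setLIntegral_congr_fun hΩ ?_
    intro x hx
    have h0 := hρ0 x hx
    simp only
    rw [lintegral_indicator measurableSet_Ioc,
      ← ofReal_integral_eq_lintegral_ofReal]
    · rw [← intervalIntegral.integral_of_le h0, integral_pow]
      norm_num
    · exact (continuous_pow 2).integrableOn_Ioc
    · exact Filter.Eventually.of_forall (fun r => by positivity)
  · apply Measurable.aemeasurable
    have : Function.uncurry (fun r (x : ℝ × ℝ) => (Set.Ioc 0 (ρ x)).indicator (fun r => ENNReal.ofReal (r ^ 2)) r)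
        = Set.indicator {p : ℝ × ℝ × ℝ | 0 < p.1 ∧ p.1 ≤ ρ p.2} (fun p => ENNReal.ofReal (p.1 ^ 2)) := by
      funext ⟨r, x⟩
      simp [Function.uncurry, Set.indicator]
    rw [this]
    refine Measurable.indicator (by fun_prop) ?_
    exact (measurableSet_lt measurable_const measurable_fst).inter
      (measurableSet_le measurable_fst (hρ.comp measurable_snd))

def phi (t : E3) : ℝ × ℝ × ℝ := (t 0 + t 1 + t 2, t 1 + t 2, t 2)

lemma phi_mp : MeasurePreserving phi volume volume := by
  have h1 : MeasurePreserving (WithLp.ofLp : E3 → (Fin 3 → ℝ)) volume volume :=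
    PiLp.volume_preserving_ofLp (Fin 3)
  have h2 : MeasurePreserving (Matrix.toLin' (!![1,1,1;0,1,1;0,0,1] : Matrix (Fin 3) (Fin 3) ℝ))
      volume volume := by
    refine ⟨(LinearMap.continuous_of_finiteDimensional _).measurable, ?_⟩
    have hd : (!![1,1,1;0,1,1;0,0,1] : Matrix (Fin 3) (Fin 3) ℝ).det = 1 := by
      simp [Matrix.det_fin_three]
    rw [Real.map_matrix_volume_pi_eq_smul_volume_pi (by rw [hd]; norm_num), hd]
    simp
  have h3 := volume_preserving_piFinSuccAbove (fun _ : Fin 3 => ℝ) 0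
  have h4 := volume_preserving_finTwoArrow ℝ
  have h5 : MeasurePreserving (Prod.map id (MeasurableEquiv.finTwoArrow (α := ℝ))) (volume : Measure (ℝ × (Fin 2 → ℝ))) (volume : Measure (ℝ × ℝ × ℝ)) :=
    (MeasurePreserving.id _).prod h4
  have h6 := h5.comp (h3.comp (h2.comp h1))
  convert h6 using 1
  funext t
  simp [phi, MeasurableEquiv.piFinSuccAbove, MeasurableEquiv.finTwoArrow, Fin.sum_univ_three, dotProduct]
  

def tri : Set (ℝ × ℝ) := {x | 0 ≤ x.2 ∧ x.2 ≤ x.1 ∧ x.1 ≤ 1}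

lemma tri_meas : MeasurableSet tri := by
  have h : IsClosed tri := by
    refine (isClosed_le continuous_const continuous_snd).inter
      ((isClosed_le continuous_snd continuous_fst).inter (isClosed_le continuous_fst continuous_const))
  exact h.measurableSet

lemma lintegral_tri (g : ℝ × ℝ → ENNReal) (hg : Measurable g) :
    ∫⁻ x in tri, g x = ∫⁻ t in Set.Icc (0:ℝ) 1, ∫⁻ u in Set.Icc (0:ℝ) t, g (t, u) := by
  rw [← lintegral_indicator tri_meas, Measure.volume_eq_prod,
    lintegral_prod _ ((hg.indicator tri_meas).aemeasurable),
    ← lintegral_indicator measurableSet_Icc]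
  refine lintegral_congr fun t => ?_
  by_cases ht : t ∈ Set.Icc (0:ℝ) 1
  · rw [Set.indicator_of_mem ht, ← lintegral_indicator measurableSet_Icc]
    refine lintegral_congr fun u => ?_
    have := ht.2
    simp [Set.indicator, tri, this]
  · rw [Set.indicator_of_notMem ht]
    have : ∀ u, tri.indicator g (t, u) = 0 := by
      intro u
      apply Set.indicator_of_notMem
      rintro ⟨h1, h2, h3⟩
      exact ht ⟨le_trans h1 h2, h3⟩
    simp [this]

def simp3 : Set E3 := {t | 0 ≤ t 0 ∧ 0 ≤ t 1 ∧ 0 ≤ t 2 ∧ t 0 + t 1 + t 2 ≤ 1}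

lemma vol_simp3 : ENNReal.ofReal (1 / 6) ≤ volume simp3 := by
  have h := vol_radial tri tri_meas (fun _ => 1) measurable_const (fun _ _ => zero_le_one)
  have hsub : phi ⁻¹' {p : ℝ × ℝ × ℝ | 0 < p.1 ∧ (p.1⁻¹ • p.2) ∈ tri ∧ p.1 ≤ 1} ⊆ simp3 := by
    rintro t ⟨h1, ⟨h2, h3, h4⟩, h5⟩
    simp only [phi, Prod.smul_fst, Prod.smul_snd, smul_eq_mul] at h1 h2 h3 h4 h5
    have h1' := inv_pos.mpr h1
    have e2 : 0 ≤ t 2 := by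
      by_contra hc; push Not at hc; nlinarith
    have e1 : 0 ≤ t 1 := by
      by_contra hc; push Not at hc; nlinarith
    have e0 : 0 ≤ t 0 := by
      rw [inv_mul_le_iff₀ h1] at h4; linarith
    exact ⟨e0, e1, e2, h5⟩
  have hmeas : MeasurableSet {p : ℝ × ℝ × ℝ | 0 < p.1 ∧ (p.1⁻¹ • p.2) ∈ tri ∧ p.1 ≤ 1} := by
    have hm : Measurable (fun p : ℝ × ℝ × ℝ => p.1⁻¹ • p.2) :=
      (measurable_fst.inv).smul measurable_snd
    exact (measurableSet_lt measurable_const measurable_fst).inter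
      ((hm tri_meas).inter (measurableSet_le measurable_fst measurable_const))
  refine le_trans (le_of_eq ?_) (measure_mono hsub)
  rw [phi_mp.measure_preimage hmeas.nullMeasurableSet, h, lintegral_tri _ (by fun_prop)]
  have : ∀ t : ℝ, ∫⁻ u in Set.Icc (0:ℝ) t, ENNReal.ofReal (1 ^ 3 / 3) = ENNReal.ofReal (t / 3) := by
    intro t
    rw [setLIntegral_const, Real.volume_Icc, ← ENNReal.ofReal_mul (by norm_num)]
    congr 1; ring
  simp_rw [this]
  rw [← ofReal_integral_eq_lintegral_ofReal]
  · rw [integral_Icc_eq_integral_Ioc, ← intervalIntegral.integral_of_le zero_le_one,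
      intervalIntegral.integral_div, integral_id]
    norm_num
  · exact (Continuous.integrableOn_Icc (by fun_prop))
  · exact (ae_restrict_iff' measurableSet_Icc).2
      (Filter.Eventually.of_forall fun t ht => div_nonneg ht.1 (by norm_num))

def Jf (β γ t : ℝ) : ℝ := t / ((1 + β * t ^ 2) * √(1 + γ * t ^ 2))

def J (β γ : ℝ) : ℝ := ∫ t in (0:ℝ)..1, Jf β γ t

lemma Jf_cont (β γ : ℝ) (hβ : 0 ≤ β) (hγ : 0 ≤ γ) : Continuous (Jf β γ) := by
  unfold Jf
  refine Continuous.div (by fun_prop) (by fun_prop) ?_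
  intro t
  positivity

def QS (β γ : ℝ) : Set E3 := {t | 0 ≤ t 0 ∧ 0 ≤ t 1 ∧ 0 ≤ t 2 ∧
  (t 0 + t 1 + t 2) ^ 2 + β * (t 1 + t 2) ^ 2 + (γ - β) * (t 2) ^ 2 ≤ 1}

lemma inner_int (A C t : ℝ) (hA : 0 < A) (hC : 0 ≤ C) (ht : 0 ≤ t) :
    ∫⁻ u in Set.Icc (0:ℝ) t, ENNReal.ofReal ((√(A + C * u ^ 2))⁻¹ ^ 3 / 3) =
      ENNReal.ofReal (t / (A * √(A + C * t ^ 2)) / 3) := by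
  have hpos : ∀ u : ℝ, 0 < A + C * u ^ 2 := fun u => by positivity
  have hcont : Continuous (fun u : ℝ => (√(A + C * u ^ 2))⁻¹ ^ 3 / 3) := by
    refine Continuous.div_const (Continuous.pow (Continuous.inv₀ (by fun_prop) ?_) 3) 3
    intro u
    exact (Real.sqrt_pos.2 (hpos u)).ne'
  rw [← ofReal_integral_eq_lintegral_ofReal]
  · congr 1
    rw [integral_Icc_eq_integral_Ioc, ← intervalIntegral.integral_of_le ht]
    have hd : ∀ u ∈ Set.uIcc 0 t, HasDerivAt (fun u => u / (A * √(A + C * u ^ 2)) / 3)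
        ((√(A + C * u ^ 2))⁻¹ ^ 3 / 3) u := by
      intro u _
      have h1 : HasDerivAt (fun u : ℝ => A + C * u ^ 2) (C * (2 * u)) u := by
        have := ((hasDerivAt_pow 2 u).const_mul C).const_add A
        simpa using this
      have h2 := (h1.sqrt (hpos u).ne').const_mul A
      have hs := Real.sqrt_pos.2 (hpos u)
      have h3 := ((hasDerivAt_id u).div h2 (mul_pos hA hs).ne').div_const 3
      refine h3.congr_deriv ?_
      have hsq := Real.sq_sqrt (hpos u).le
      set s := √(A + C * u ^ 2)
      simp only [id]
      field_simp
      linear_combination hsq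
    rw [intervalIntegral.integral_eq_sub_of_hasDerivAt hd (hcont.intervalIntegrable _ _)]
    simp
  · exact hcont.integrableOn_Icc
  · exact Filter.Eventually.of_forall (fun u => by positivity)

lemma vol_QS (β γ : ℝ) (hβ : 0 ≤ β) (hγ : β ≤ γ) :
    volume (QS β γ) ≤ ENNReal.ofReal (J β γ / 3) := by
  set ρ : ℝ × ℝ → ℝ := fun x => (√(1 + β * x.1 ^ 2 + (γ - β) * x.2 ^ 2))⁻¹ with hρdef
  have hρ : Measurable ρ := by
    refine Measurable.inv (Continuous.measurable (by fun_prop))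
  have h := vol_radial tri tri_meas ρ hρ (fun x _ => by positivity)
  have hsub : QS β γ ⊆ phi ⁻¹' {p : ℝ × ℝ × ℝ | 0 < p.1 ∧ (p.1⁻¹ • p.2) ∈ tri ∧
      p.1 ≤ ρ (p.1⁻¹ • p.2)} ∪ {0} := by
    rintro t ⟨h0, h1, h2, h3⟩
    by_cases hz : t 0 + t 1 + t 2 = 0
    · right
      ext i
      fin_cases i
      · simp; linarith
      · simp; linarith
      · simp; linarith
    · left
      have hp : 0 < t 0 + t 1 + t 2 := lt_of_le_of_ne (by linarith) (Ne.symm hz)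
      have hi := inv_pos.2 hp
      refine ⟨hp, ⟨?_, ?_, ?_⟩, ?_⟩
      · simp only [phi, smul_eq_mul, Prod.smul_snd]; positivity
      · simp only [phi, Prod.smul_snd, Prod.smul_fst, smul_eq_mul]
        exact mul_le_mul_of_nonneg_left (by linarith) hi.le
      · simp only [phi, Prod.smul_snd, Prod.smul_fst, smul_eq_mul]
        rw [inv_mul_le_iff₀ hp]; linarith
      · simp only [phi, Prod.smul_snd, Prod.smul_fst, smul_eq_mul, hρdef]
        have hgb : 0 ≤ γ - β := by linarith
        have hq : 0 < 1 + β * ((t 0 + t 1 + t 2)⁻¹ * (t 1 + t 2)) ^ 2 +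
            (γ - β) * ((t 0 + t 1 + t 2)⁻¹ * t 2) ^ 2 := by positivity
        rw [le_inv_comm₀ hp (Real.sqrt_pos.2 hq)]
        refine Real.sqrt_le_iff.2 ⟨hi.le, ?_⟩
        have : 1 + β * ((t 0 + t 1 + t 2)⁻¹ * (t 1 + t 2)) ^ 2 +
            (γ - β) * ((t 0 + t 1 + t 2)⁻¹ * t 2) ^ 2 =
            (t 0 + t 1 + t 2)⁻¹ ^ 2 * ((t 0 + t 1 + t 2) ^ 2 + β * (t 1 + t 2) ^ 2 + (γ - β) * (t 2) ^ 2) := by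
          field_simp
        rw [this]
        exact mul_le_of_le_one_right (by positivity) h3
  have hmeas : MeasurableSet {p : ℝ × ℝ × ℝ | 0 < p.1 ∧ (p.1⁻¹ • p.2) ∈ tri ∧
      p.1 ≤ ρ (p.1⁻¹ • p.2)} := by
    have hm : Measurable (fun p : ℝ × ℝ × ℝ => p.1⁻¹ • p.2) :=
      (measurable_fst.inv).smul measurable_snd
    exact (measurableSet_lt measurable_const measurable_fst).inter
      ((hm tri_meas).inter (measurableSet_le measurable_fst (hρ.comp hm)))
  refine le_trans (measure_mono hsub) (le_trans (measure_union_le _ _) ?_)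
  rw [phi_mp.measure_preimage hmeas.nullMeasurableSet, h, lintegral_tri _ (by fun_prop),
    measure_singleton, add_zero]
  have : ∫⁻ t in Set.Icc (0:ℝ) 1, ∫⁻ u in Set.Icc (0:ℝ) t, ENNReal.ofReal (ρ (t, u) ^ 3 / 3) =
      ∫⁻ t in Set.Icc (0:ℝ) 1, ENNReal.ofReal (Jf β γ t / 3) := by
    refine setLIntegral_congr_fun measurableSet_Icc ?_
    intro t ht
    simp only [hρdef]
    rw [inner_int (1 + β * t ^ 2) (γ - β) t (by positivity) (by linarith) ht.1]
    unfold Jf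
    congr 5
    ring
  rw [this, ← ofReal_integral_eq_lintegral_ofReal]
  · rw [integral_Icc_eq_integral_Ioc, ← intervalIntegral.integral_of_le zero_le_one,
      intervalIntegral.integral_div, J]
  · exact ((Jf_cont β γ hβ (by linarith)).div_const 3).integrableOn_Icc
  · refine (ae_restrict_iff' measurableSet_Icc).2
      (Filter.Eventually.of_forall fun t ht => ?_)
    have := ht.1
    have : 0 ≤ γ := by linarith
    simp only [Pi.zero_apply]
    unfold Jf; positivity

/-! Numerical comparison of the three integrals. -/


lemma J_oct : δoct = 2 * J (1 / 3) 1 := by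
  have hd : ∀ t ∈ Set.uIcc (0:ℝ) 1, HasDerivAt (fun t => 3 / 2 * √2 * arctan (√(1 + 1 * t ^ 2) / √2))
      (Jf (1 / 3) 1 t) t := by
    intro t _
    have hp : 0 < 1 + 1 * t ^ 2 := by positivity
    have h1 : HasDerivAt (fun u : ℝ => 1 + 1 * u ^ 2) (1 * (2 * t)) t := by
      have := ((hasDerivAt_pow 2 t).const_mul (1:ℝ)).const_add 1
      simpa using this
    have h3 := ((h1.sqrt hp.ne').div_const (√2)).arctan.const_mul (3 / 2 * √2)
    refine h3.congr_deriv ?_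
    have h2 := Real.sq_sqrt (show (0:ℝ) ≤ 2 by norm_num)
    have hsq := Real.sq_sqrt hp.le
    have hs := Real.sqrt_pos.2 hp
    have hs2 := Real.sqrt_pos.2 (show (0:ℝ) < 2 by norm_num)
    unfold Jf
    set s := √(1 + 1 * t ^ 2)
    rw [div_pow, h2, hsq]
    have : 1 + (1 + 1 * t ^ 2) / 2 ≠ 0 := by positivity
    have : 1 + 1 / 3 * t ^ 2 ≠ 0 := by positivity
    field_simp
    ring
  have hJ : J (1 / 3) 1 = 3 / 2 * √2 * arctan (√(1 + 1 * 1 ^ 2) / √2) -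
      3 / 2 * √2 * arctan (√(1 + 1 * 0 ^ 2) / √2) := by
    unfold J
    rw [intervalIntegral.integral_eq_sub_of_hasDerivAt hd
      ((Jf_cont _ _ (by norm_num) (by norm_num)).intervalIntegrable _ _)]
  have hs2 := Real.sqrt_pos.2 (show (0:ℝ) < 2 by norm_num)
  have hs3 := Real.sqrt_pos.2 (show (0:ℝ) < 3 by norm_num)
  have h22 := Real.sq_sqrt (show (0:ℝ) ≤ 2 by norm_num)
  have h33 := Real.sq_sqrt (show (0:ℝ) ≤ 3 by norm_num)
  have harc : arccos (1 / √3) = π / 2 - arctan (1 / √2) := by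
    have h1 : arctan (1 / √2) = arcsin (1 / √3) := by
      rw [arctan_eq_arcsin]
      congr 1
      have : 1 + (1 / √2) ^ 2 = 3 / 2 := by rw [div_pow, h22]; norm_num
      rw [this, Real.sqrt_div (by norm_num)]
      field_simp
    rw [h1, arccos]
  have e1 : √(1 + 1 * (1:ℝ) ^ 2) / √2 = 1 := by
    rw [show (1 + 1 * (1:ℝ) ^ 2) = 2 by norm_num]; field_simp
  have e0 : √(1 + 1 * (0:ℝ) ^ 2) / √2 = 1 / √2 := by
    rw [show (1 + 1 * (0:ℝ) ^ 2) = 1 by norm_num, Real.sqrt_one]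
  have h8 : √8 = 2 * √2 := by
    rw [show (8:ℝ) = 2 ^ 2 * 2 by norm_num, Real.sqrt_mul (by norm_num), Real.sqrt_sq (by norm_num)]
  rw [hJ, e1, e0, arctan_one, δoct, harc, h8]
  field_simp
  ring_nf
  rw [h22]
  ring

lemma Jf_le (β γ β' γ' t : ℝ) (hβ : 0 ≤ β) (h : β ≤ β') (hγ : 0 ≤ γ) (h' : γ ≤ γ') (ht : 0 ≤ t) :
    Jf β' γ' t ≤ Jf β γ t := by
  have hβ' : 0 ≤ β' := hβ.trans h
  have hγ' : 0 ≤ γ' := hγ.trans h'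
  unfold Jf
  gcongr

lemma J_le (β γ β' γ' : ℝ) (hβ : 0 ≤ β) (h : β ≤ β') (hγ : 0 ≤ γ) (h' : γ ≤ γ') :
    J β' γ' ≤ J β γ := by
  unfold J
  refine intervalIntegral.integral_mono_on zero_le_one
    ((Jf_cont _ _ (by linarith) (by linarith)).intervalIntegrable _ _)
    ((Jf_cont _ _ (by linarith) (by linarith)).intervalIntegrable _ _) ?_
  intro t ht
  exact Jf_le _ _ _ _ _ hβ h hγ h' ht.1

lemma Jg_pt (t : ℝ) (ht : 0 < t) : Jf 0.64 0.87 t < Jf (1 / 3) 1 t := by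
  unfold Jf
  apply div_lt_div_of_pos_left ht (by positivity)
  apply lt_of_pow_lt_pow_left₀ 2 (by positivity)
  rw [mul_pow, mul_pow, Real.sq_sqrt (by positivity), Real.sq_sqrt (by positivity)]
  have : 0 < t ^ 2 := by positivity
  nlinarith [pow_pos this 2, pow_pos this 3]

lemma Jg_lt : J 0.64 0.87 < J (1 / 3) 1 := by
  unfold J
  refine intervalIntegral.integral_lt_integral_of_continuousOn_of_le_of_exists_lt zero_lt_one
    (Jf_cont _ _ (by norm_num) (by norm_num)).continuousOn
    (Jf_cont _ _ (by norm_num) (by norm_num)).continuousOn ?_ ⟨1, by simp, Jg_pt 1 one_pos⟩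
  intro t ht
  exact (Jg_pt t ht.1).le

lemma Jb_pt (t : ℝ) (ht : 0 ≤ t) :
    0.2875 * Jf 0.64 0.87 t + Jf (1 / 3) 0.87 t ≤ 1.2875 * Jf (1 / 3) 1 t := by
  unfold Jf
  have hP := Real.sqrt_pos.2 (show 0 < 1 + 0.87 * t ^ 2 by positivity)
  have hR := Real.sqrt_pos.2 (show 0 < 1 + 1 * t ^ 2 by positivity)
  have hP2 := Real.sq_sqrt (show 0 ≤ 1 + 0.87 * t ^ 2 by positivity)
  have hR2 := Real.sq_sqrt (show 0 ≤ 1 + 1 * t ^ 2 by positivity)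
  set P := √(1 + 0.87 * t ^ 2)
  set R := √(1 + 1 * t ^ 2)
  have key : R * (0.2875 * (1 + 1 / 3 * t ^ 2) + (1 + 0.64 * t ^ 2)) ≤
      1.2875 * (1 + 0.64 * t ^ 2) * P := by
    apply le_of_sq_le_sq ?_ (by positivity)
    rw [mul_pow, mul_pow, hP2, hR2]
    have : 0 ≤ t ^ 2 := by positivity
    nlinarith [pow_nonneg this 2, pow_nonneg this 3]
  have e1 : 0.2875 * (t / ((1 + 0.64 * t ^ 2) * P)) + t / ((1 + 1 / 3 * t ^ 2) * P) =
      t / ((1 + 0.64 * t ^ 2) * P * (1 + 1 / 3 * t ^ 2) * R) *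
        (R * (0.2875 * (1 + 1 / 3 * t ^ 2) + (1 + 0.64 * t ^ 2))) := by
    have : 1 + 0.64 * t ^ 2 ≠ 0 := by positivity
    have : 1 + 1 / 3 * t ^ 2 ≠ 0 := by positivity
    field_simp
  have e2 : 1.2875 * (t / ((1 + 1 / 3 * t ^ 2) * R)) =
      t / ((1 + 0.64 * t ^ 2) * P * (1 + 1 / 3 * t ^ 2) * R) * (1.2875 * (1 + 0.64 * t ^ 2) * P) := by
    have : 1 + 0.64 * t ^ 2 ≠ 0 := by positivity
    have : 1 + 1 / 3 * t ^ 2 ≠ 0 := by positivity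
    field_simp
  rw [e1, e2]
  exact mul_le_mul_of_nonneg_left key (by positivity)

lemma Jb_le : 0.2875 * J 0.64 0.87 + J (1 / 3) 0.87 ≤ 1.2875 * J (1 / 3) 1 := by
  unfold J
  have i1 := (Jf_cont 0.64 0.87 (by norm_num) (by norm_num))
  have i2 := (Jf_cont (1/3) 0.87 (by norm_num) (by norm_num))
  have i3 := (Jf_cont (1/3) 1 (by norm_num) (by norm_num))
  rw [← intervalIntegral.integral_const_mul, ← intervalIntegral.integral_const_mul,
    ← intervalIntegral.integral_add ((i1.const_mul _).intervalIntegrable _ _)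
      (i2.intervalIntegrable _ _)]
  refine intervalIntegral.integral_mono_on zero_le_one
    (((i1.const_mul _).add i2).intervalIntegrable _ _)
    ((i3.const_mul _).intervalIntegrable _ _) ?_
  intro t ht
  exact Jb_pt t ht.1

lemma J_nonneg (β γ : ℝ) (hβ : 0 ≤ β) (hγ : 0 ≤ γ) : 0 ≤ J β γ := by
  unfold J
  refine intervalIntegral.integral_nonneg zero_le_one ?_
  intro t ht
  have := ht.1
  unfold Jf; positivity

/-! Linear algebra and cones. -/

def Lm (u v w : E3) : E3 →ₗ[ℝ] E3 where
  toFun t := t 0 • u + t 1 • v + t 2 • w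
  map_add' x y := by
    simp only [PiLp.add_apply]; module
  map_smul' c x := by
    simp only [PiLp.smul_apply, smul_eq_mul, RingHom.id_apply]; module

lemma Lm_apply (u v w t : E3) : Lm u v w t = t 0 • u + t 1 • v + t 2 • w := rfl

def dt (u v w : E3) : ℝ := LinearMap.det (Lm u v w)

lemma dt_eq (u v w : E3) : dt u v w =
    u 0 * v 1 * w 2 - u 0 * v 2 * w 1 - u 1 * v 0 * w 2 + u 1 * v 2 * w 0
      + u 2 * v 0 * w 1 - u 2 * v 1 * w 0 := by
  unfold dt
  rw [← LinearMap.det_toMatrix (EuclideanSpace.basisFun (Fin 3) ℝ).toBasis, Matrix.det_fin_three]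
  simp [LinearMap.toMatrix_apply, Lm_apply]
  ring

def cone (u v w : E3) : Set E3 :=
  {x | ∃ a b c : ℝ, 0 ≤ a ∧ 0 ≤ b ∧ 0 ≤ c ∧ x = a • u + b • v + c • w}

lemma cone_swap12 (u v w : E3) : cone u v w = cone v u w := by
  ext x
  constructor
  · rintro ⟨a, b, c, ha, hb, hc, rfl⟩
    exact ⟨b, a, c, hb, ha, hc, by module⟩
  · rintro ⟨a, b, c, ha, hb, hc, rfl⟩
    exact ⟨b, a, c, hb, ha, hc, by module⟩

lemma cone_swap23 (u v w : E3) : cone u v w = cone u w v := by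
  ext x
  constructor
  · rintro ⟨a, b, c, ha, hb, hc, rfl⟩
    exact ⟨a, c, b, ha, hc, hb, by module⟩
  · rintro ⟨a, b, c, ha, hb, hc, rfl⟩
    exact ⟨a, c, b, ha, hc, hb, by module⟩

lemma cone_convex (u v w : E3) : Convex ℝ (cone u v w) := by
  rintro x ⟨a, b, c, ha, hb, hc, rfl⟩ y ⟨a', b', c', ha', hb', hc', rfl⟩ s t hs ht _
  exact ⟨s * a + t * a', s * b + t * b', s * c + t * c', by positivity, by positivity,
    by positivity, by module⟩

lemma cone_sub_range (u v w : E3) : cone u v w ⊆ Lm u v w '' Set.univ := by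
  rintro x ⟨a, b, c, ha, hb, hc, rfl⟩
  exact ⟨!₂[a, b, c], trivial, by simp [Lm_apply]⟩

lemma null_of_dt (u v w : E3) (h : dt u v w = 0) (s : Set E3) (hs : s ⊆ Lm u v w '' Set.univ) :
    volume s = 0 := by
  refine measure_mono_null hs ?_
  rw [Measure.addHaar_image_linearMap]
  unfold dt at h
  simp [h]

lemma Lm_inj (u v w : E3) (h : dt u v w ≠ 0) (a b c : ℝ) (h0 : a • u + b • v + c • w = 0) :
    a = 0 ∧ b = 0 ∧ c = 0 := by
  have hk : LinearMap.ker (Lm u v w) = ⊥ := by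
    by_contra hne
    exact h (LinearMap.det_eq_zero_iff_ker_ne_bot.2 hne)
  have hm : (!₂[a, b, c] : E3) ∈ LinearMap.ker (Lm u v w) := by
    rw [LinearMap.mem_ker, Lm_apply]
    simpa using h0
  rw [hk, Submodule.mem_bot] at hm
  refine ⟨?_, ?_, ?_⟩
  · simpa using congrArg (fun x : E3 => x 0) hm
  · simpa using congrArg (fun x : E3 => x 1) hm
  · simpa using congrArg (fun x : E3 => x 2) hm

lemma cone_split (X : Set E3) (hX : NullMeasurableSet X volume) (u v w : E3) (a b : ℝ)
    (ha : 0 ≤ a) (hb : 0 ≤ b) (hab : 0 < a + b) (f : E3) (hf : f = a • u + b • v) :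
    volume (X ∩ cone u v w) = volume (X ∩ cone u f w) + volume (X ∩ cone f v w) := by
  have hcov : cone u v w = cone u f w ∪ cone f v w := by
    ext x
    constructor
    · rintro ⟨x1, x2, x3, h1, h2, h3, rfl⟩
      rcases le_or_gt (a * x2) (b * x1) with h | h
      · left
        rcases hb.eq_or_lt with hb0 | hb0
        · have ha0 : 0 < a := by linarith
          have : x2 = 0 := by
            rw [← hb0] at h
            nlinarith
          exact ⟨x1, 0, x3, h1, le_rfl, h3, by rw [this]; module⟩
        · refine ⟨x1 - a * x2 / b, x2 / b, x3, ?_, by positivity, h3, ?_⟩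
          · rw [sub_nonneg, div_le_iff₀ hb0]; linarith
          · rw [hf]
            match_scalars <;> field_simp <;> ring
      · right
        have ha0 : 0 < a := by
          rcases ha.eq_or_lt with h0 | h0
          · rw [← h0] at h
            have := mul_nonneg hb h1
            linarith
          · exact h0
        refine ⟨x1 / a, x2 - b * x1 / a, x3, by positivity, ?_, h3, ?_⟩
        · rw [sub_nonneg, div_le_iff₀ ha0]; linarith
        · rw [hf]
          match_scalars <;> field_simp <;> ring
    · rintro (⟨x1, x2, x3, h1, h2, h3, rfl⟩ | ⟨x1, x2, x3, h1, h2, h3, rfl⟩)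
      · exact ⟨x1 + x2 * a, x2 * b, x3, by positivity, by positivity, h3, by rw [hf]; module⟩
      · exact ⟨x1 * a, x2 + x1 * b, x3, by positivity, by positivity, h3, by rw [hf]; module⟩
  rw [hcov, Set.inter_union_distrib_left]
  apply measure_union₀
  · exact hX.inter ((cone_convex _ _ _).nullMeasurableSet volume)
  · have hsub : (X ∩ cone u f w) ∩ (X ∩ cone f v w) ⊆ cone u f w ∩ cone f v w :=
      fun x hx => ⟨hx.1.2, hx.2.2⟩
    refine measure_mono_null hsub ?_
    by_cases hd : dt u v w = 0
    · refine null_of_dt u v w hd _ (fun x hx => cone_sub_range u v w ?_)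
      rw [hcov]; exact Or.inl hx.1
    · refine null_of_dt 0 f w (by rw [dt_eq]; simp) _ ?_
      rintro x ⟨⟨t1, t2, t3, h1, h2, h3, hx⟩, ⟨s1, s2, s3, k1, k2, k3, hy⟩⟩
      have h0 : (t1 + a * t2 - a * s1) • u + (b * t2 - b * s1 - s2) • v + (t3 - s3) • w = 0 := by
        have : (t1 • u + t2 • f + t3 • w) - (s1 • f + s2 • v + s3 • w) = 0 := by
          rw [← hx, ← hy, sub_self]
        rw [← this, hf]; module
      obtain ⟨e1, e2, e3⟩ := Lm_inj u v w hd _ _ _ h0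
      have e4 : b * t1 + a * s2 = 0 := by linear_combination b * e1 - a * e2
      have p1 := mul_nonneg hb h1
      have p2 := mul_nonneg ha k2
      rcases hb.eq_or_lt with hb0 | hb0
      · have ha0 : 0 < a := by linarith
        have : s2 = 0 := by
          have : a * s2 = 0 := by linarith
          rcases mul_eq_zero.1 this with h | h
          · linarith
          · exact h
        exact ⟨!₂[0, s1, s3], trivial, by simp [Lm_apply, hy, this]⟩
      · have : t1 = 0 := by
          have : b * t1 = 0 := by linarith
          rcases mul_eq_zero.1 this with h | h
          · linarith
          · exact h
        exact ⟨!₂[0, t2, t3], trivial, by simp [Lm_apply, hx, this]⟩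

lemma cone_split3 (X : Set E3) (hX : NullMeasurableSet X volume) (A B C q : E3) (la lb lc : ℝ)
    (ha : 0 ≤ la) (hb : 0 ≤ lb) (hc : 0 ≤ lc) (h : 0 < lb + lc)
    (hq : q = la • A + lb • B + lc • C) :
    volume (X ∩ cone A B C) =
      volume (X ∩ cone A B q) + volume (X ∩ cone A C q) + volume (X ∩ cone B C q) := by
  set r := lb • B + lc • C with hr
  have hqr : q = la • A + (1:ℝ) • r := by rw [hq, hr]; module
  have hqr' : 0 < la + 1 := by linarith
  have s1 := cone_split X hX B C A lb lc hb hc h r hr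
  have s2 := cone_split X hX A r B la 1 ha zero_le_one hqr' q hqr
  have s3 := cone_split X hX A r C la 1 ha zero_le_one hqr' q hqr
  have s4 := cone_split X hX B C q lb lc hb hc h r hr
  have e1 : cone B C A = cone A B C := by rw [cone_swap23, cone_swap12]
  have e2 : cone B r A = cone A r B := by
    rw [cone_swap12, cone_swap23, cone_swap12]
  have e3 : cone r C A = cone A r C := by rw [cone_swap23, cone_swap12]
  have e4 : cone A q B = cone A B q := by rw [cone_swap23]
  have e5 : cone A q C = cone A C q := by rw [cone_swap23]
  have e6 : cone q r B = cone B r q := by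
    rw [cone_swap12, cone_swap23, cone_swap12]
  have e7 : cone q r C = cone r C q := by
    rw [cone_swap12, cone_swap23]
  rw [e1, e2, e3] at s1
  rw [e4, e6] at s2
  rw [e5, e7] at s3
  rw [s1, s2, s3, s4]
  ring

/-! Rogers simplices. -/

lemma rogers_ball (u f q : E3) (β γ : ℝ) (hβ : 0 ≤ β) (hγ : β ≤ γ)
    (hu : 1 ≤ inner ℝ u u) (hf : 1 + β ≤ inner ℝ f f) (hq : 1 + γ ≤ inner ℝ q q)
    (huf : inner ℝ u f = inner ℝ u u) (huq : inner ℝ u q = inner ℝ u u)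
    (hfq : inner ℝ f q = inner ℝ f f) :
    volume (Metric.closedBall (0 : E3) 1 ∩ cone u f q) ≤
      ENNReal.ofReal (|dt u f q| * (J β γ / 3)) := by
  have hsub : Metric.closedBall (0 : E3) 1 ∩ cone u f q ⊆ Lm u f q '' QS β γ := by
    rintro x ⟨hx, ⟨a, b, c, ha, hb, hc, rfl⟩⟩
    refine ⟨!₂[a, b, c], ⟨by simpa using ha, by simpa using hb, by simpa using hc, ?_⟩,
      by simp [Lm_apply]⟩
    have hn : inner ℝ (a • u + b • f + c • q) (a • u + b • f + c • q) ≤ (1:ℝ) := by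
      rw [real_inner_self_eq_norm_sq]
      rw [mem_closedBall_zero_iff] at hx
      nlinarith [norm_nonneg (a • u + b • f + c • q)]
    simp only [inner_add_left, inner_add_right, real_inner_smul_left, real_inner_smul_right,
      huf, huq, hfq] at hn
    simp
    have m1 := mul_nonneg (show 0 ≤ a * (a + 2 * b + 2 * c) by positivity) (sub_nonneg.2 hu)
    have m2 := mul_nonneg (show 0 ≤ b * (b + 2 * c) by positivity) (sub_nonneg.2 hf)
    have m3 := mul_nonneg (show 0 ≤ c * c by positivity) (sub_nonneg.2 hq)
    rw [real_inner_comm] at huf huq hfq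
    simp only [huf, huq, hfq] at hn
    nlinarith
  refine le_trans (measure_mono hsub) ?_
  rw [Measure.addHaar_image_linearMap, ENNReal.ofReal_mul (abs_nonneg _)]
  exact mul_le_mul_right (vol_QS β γ hβ hγ) _

lemma rogers_simp (u f q : E3) (X : Set E3) (hX : Convex ℝ X) (h0 : 0 ∈ X) (hu : u ∈ X)
    (hf : f ∈ X) (hq : q ∈ X) :
    ENNReal.ofReal (|dt u f q| * (1 / 6)) ≤ volume (X ∩ cone u f q) := by
  have hsub : Lm u f q '' simp3 ⊆ X ∩ cone u f q := by
    rintro x ⟨t, ⟨h1, h2, h3, h4⟩, rfl⟩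
    refine ⟨?_, ⟨t 0, t 1, t 2, h1, h2, h3, rfl⟩⟩
    rw [Lm_apply]
    have hsum : ∑ i : Fin 4, (![1 - (t 0 + t 1 + t 2), t 0, t 1, t 2] i) • (![0, u, f, q] i) ∈ X := by
      apply hX.sum_mem
      · intro i _
        fin_cases i <;> simp <;> linarith
      · simp [Fin.sum_univ_four]; ring
      · intro i _
        fin_cases i <;> simp <;> assumption
    simpa [Fin.sum_univ_four] using hsum
  refine le_trans ?_ (measure_mono hsub)
  rw [Measure.addHaar_image_linearMap, ENNReal.ofReal_mul (abs_nonneg _)]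
  exact mul_le_mul_right vol_simp3 _

/-! One face of the simplex. -/

lemma face_bound (A B C q : E3) (la lb lc xA xB g : ℝ) (X : Set E3) (β γ : ℝ)
    (hlc : 0 ≤ lc) (hq : q = la • A + lb • B + lc • C)
    (hAA : inner ℝ A A = xA) (hBB : inner ℝ B B = xB) (hAB : inner ℝ A B = g)
    (hqA : inner ℝ q A = xA / 2) (hqB : inner ℝ q B = xB / 2)
    (hA4 : 4 ≤ xA) (hB4 : 4 ≤ xB) (hg0 : 0 ≤ g) (hgA : g ≤ xA) (hgB : g ≤ xB)
    (hΔ : 0 < xA * xB - g ^ 2)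
    (hβ : 0 ≤ β) (hγ : β ≤ γ)
    (hb : (1 + β) * (4 * (xA * xB - g ^ 2)) ≤ xA * xB * (xA + xB - 2 * g))
    (hc : 1 + γ ≤ inner ℝ q q)
    (hX : Convex ℝ X) (h0 : 0 ∈ X) (hA : (1 / 2 : ℝ) • A ∈ X) (hB : (1 / 2 : ℝ) • B ∈ X)
    (hqX : q ∈ X)
    (hfX : ∀ μ ν : ℝ, 0 ≤ μ → 0 ≤ ν → μ + ν ≤ 1 →
      inner ℝ (μ • A + ν • B) A = xA / 2 → inner ℝ (μ • A + ν • B) B = xB / 2 →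
      inner ℝ (μ • A + ν • B) C ≤ inner ℝ q C → μ • A + ν • B ∈ X) :
    ∃ σ : ℝ, 1 / 2 ≤ σ ∧ σ ≤ 1 ∧
      volume (Metric.closedBall (0 : E3) 1 ∩ cone A B q) ≤
        ENNReal.ofReal (|dt A B C| * lc * σ * J β γ / 6) ∧
      ENNReal.ofReal (|dt A B C| * lc * σ / 12) ≤ volume (X ∩ cone A B q) := by
  set Δ := xA * xB - g ^ 2 with hΔdef
  set μ := xB * (xA - g) / (2 * Δ) with hμ
  set ν := xA * (xB - g) / (2 * Δ) with hν
  have hμ0 : 0 ≤ μ := div_nonneg (mul_nonneg (by linarith) (by linarith)) (by linarith)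
  have hν0 : 0 ≤ ν := div_nonneg (mul_nonneg (by linarith) (by linarith)) (by linarith)
  have hsum : μ + ν = (xB * (xA - g) + xA * (xB - g)) / (2 * Δ) := by rw [hμ, hν, add_div]
  have hs1 : μ + ν ≤ 1 := by
    rw [hsum, div_le_one (by linarith)]
    nlinarith [mul_nonneg hg0 (show 0 ≤ xA + xB - 2 * g by linarith)]
  have hs2 : 1 / 2 ≤ μ + ν := by
    rw [hsum, le_div_iff₀ (by linarith)]
    nlinarith [mul_nonneg (sub_nonneg.2 hgA) (sub_nonneg.2 hgB)]
  set f := μ • A + ν • B with hf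
  have hBA : inner ℝ B A = g := by rw [real_inner_comm, hAB]
  have hfA : inner ℝ f A = xA / 2 := by
    rw [hf, inner_add_left, real_inner_smul_left, real_inner_smul_left, hAA, hBA, hμ, hν]
    field_simp
    rw [hΔdef]; ring
  have hfB : inner ℝ f B = xB / 2 := by
    rw [hf, inner_add_left, real_inner_smul_left, real_inner_smul_left, hAB, hBB, hμ, hν]
    field_simp
    rw [hΔdef]; ring
  have hff : inner ℝ f f = xA * xB * (xA + xB - 2 * g) / (4 * Δ) := by
    have : inner ℝ f f = μ * inner ℝ f A + ν * inner ℝ f B := by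
      conv_lhs => rw [hf]
      rw [← hf]
      nth_rewrite 2 [hf]
      rw [inner_add_right, real_inner_smul_right, real_inner_smul_right]
    rw [this, hfA, hfB, hμ, hν]
    field_simp
    ring
  have hqf : inner ℝ q f = inner ℝ f f := by
    have h1 : inner ℝ f f = μ * inner ℝ f A + ν * inner ℝ f B := by
      nth_rewrite 2 [hf]
      rw [inner_add_right, real_inner_smul_right, real_inner_smul_right]
    have h2 : inner ℝ q f = μ * inner ℝ q A + ν * inner ℝ q B := by
      rw [hf, inner_add_right, real_inner_smul_right, real_inner_smul_right]
    rw [h1, h2, hfA, hfB, hqA, hqB]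
  have hfq : inner ℝ f q = inner ℝ f f := by rw [real_inner_comm, hqf]
  have hAf : inner ℝ A f = xA / 2 := by rw [real_inner_comm, hfA]
  have hBf : inner ℝ B f = xB / 2 := by rw [real_inner_comm, hfB]
  have hAq : inner ℝ A q = xA / 2 := by rw [real_inner_comm, hqA]
  have hBq : inner ℝ B q = xB / 2 := by rw [real_inner_comm, hqB]
  -- `f` lies in `X`
  have hfC : inner ℝ f C ≤ inner ℝ q C := by
    have hn : inner ℝ (q - f) (q - f) = lc * inner ℝ (q - f) C := by
      have h1 : inner ℝ (q - f) f = 0 := by rw [inner_sub_left, hqf]; ring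
      have h2 : inner ℝ (q - f) A = 0 := by rw [inner_sub_left, hqA, hfA]; ring
      have h3 : inner ℝ (q - f) B = 0 := by rw [inner_sub_left, hqB, hfB]; ring
      rw [inner_sub_right, h1, sub_zero]
      have h5 : inner ℝ (q - f) q = la * inner ℝ (q - f) A + lb * inner ℝ (q - f) B
          + lc * inner ℝ (q - f) C := by
        generalize q - f = n
        rw [hq, inner_add_right, inner_add_right, real_inner_smul_right, real_inner_smul_right,
          real_inner_smul_right]
      rw [h5, h2, h3]
      ring
    rw [← sub_nonneg, ← inner_sub_left]
    rcases hlc.eq_or_lt with h | h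
    · rw [← h, zero_mul] at hn
      rw [inner_self_eq_zero.1 hn, inner_zero_left]
    · have h4 : 0 ≤ inner ℝ (q - f) (q - f) := real_inner_self_nonneg
      rw [hn] at h4
      exact nonneg_of_mul_nonneg_right h4 h
  have hfX' : f ∈ X := hfX μ ν hμ0 hν0 hs1 hfA hfB hfC
  have hfβ : 1 + β ≤ inner ℝ f f := by
    rw [hff, le_div_iff₀ (by linarith)]; exact hb
  -- the two Rogers simplices
  have d1 : dt ((1 / 2 : ℝ) • A) f q = 1 / 2 * ν * lc * dt A B C := by
    rw [dt_eq, dt_eq, hf, hq]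
    simp only [PiLp.add_apply, PiLp.smul_apply, smul_eq_mul]
    ring
  have d2 : dt ((1 / 2 : ℝ) • B) f q = - (1 / 2 * μ * lc * dt A B C) := by
    rw [dt_eq, dt_eq, hf, hq]
    simp only [PiLp.add_apply, PiLp.smul_apply, smul_eq_mul]
    ring
  have a1 : |dt ((1 / 2 : ℝ) • A) f q| = 1 / 2 * ν * lc * |dt A B C| := by
    rw [d1, abs_mul, abs_of_nonneg (by positivity : 0 ≤ 1 / 2 * ν * lc)]
  have a2 : |dt ((1 / 2 : ℝ) • B) f q| = 1 / 2 * μ * lc * |dt A B C| := by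
    rw [d2, abs_neg, abs_mul, abs_of_nonneg (by positivity : 0 ≤ 1 / 2 * μ * lc)]
  have chalf : ∀ u v w : E3, cone ((1 / 2 : ℝ) • u) v w = cone u v w := by
    intro u v w
    ext x
    constructor
    · rintro ⟨a, b, c, h1, h2, h3, rfl⟩
      exact ⟨a * (1 / 2), b, c, by positivity, h2, h3, by module⟩
    · rintro ⟨a, b, c, h1, h2, h3, rfl⟩
      exact ⟨a * 2, b, c, by positivity, h2, h3, by module⟩
  have hsplit : ∀ Y : Set E3, NullMeasurableSet Y volume → volume (Y ∩ cone A B q) =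
      volume (Y ∩ cone ((1 / 2 : ℝ) • A) f q) + volume (Y ∩ cone ((1 / 2 : ℝ) • B) f q) := by
    intro Y hY
    rw [chalf, chalf, cone_swap12 B f q]
    exact cone_split Y hY A B q μ ν hμ0 hν0 (by linarith) f hf
  have r1 := rogers_ball ((1 / 2 : ℝ) • A) f q β γ hβ hγ
    (by rw [real_inner_smul_left, real_inner_smul_right, hAA]; linarith) hfβ hc
    (by simp only [real_inner_smul_left, real_inner_smul_right, hAA, hAf]; ring)
    (by simp only [real_inner_smul_left, real_inner_smul_right, hAA, hAq]; ring) hfq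
  have r2 := rogers_ball ((1 / 2 : ℝ) • B) f q β γ hβ hγ
    (by rw [real_inner_smul_left, real_inner_smul_right, hBB]; linarith) hfβ hc
    (by simp only [real_inner_smul_left, real_inner_smul_right, hBB, hBf]; ring)
    (by simp only [real_inner_smul_left, real_inner_smul_right, hBB, hBq]; ring) hfq
  have s1 := rogers_simp ((1 / 2 : ℝ) • A) f q X hX h0 hA hfX' hqX
  have s2 := rogers_simp ((1 / 2 : ℝ) • B) f q X hX h0 hB hfX' hqX
  have hJ := J_nonneg β γ hβ (by linarith)
  refine ⟨μ + ν, hs2, hs1, ?_, ?_⟩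
  · rw [hsplit _ measurableSet_closedBall.nullMeasurableSet]
    refine le_trans (add_le_add r1 r2) ?_
    rw [a1, a2, ← ENNReal.ofReal_add (by positivity) (by positivity)]
    apply le_of_eq
    congr 1; ring
  · rw [hsplit _ (hX.nullMeasurableSet volume)]
    refine le_trans ?_ (add_le_add s1 s2)
    rw [a1, a2, ← ENNReal.ofReal_add (by positivity) (by positivity)]
    apply le_of_eq
    congr 1; ring

/-! Circumradius estimates, in terms of squared edge lengths. -/

def dd (x y z : ℝ) : ℝ := 2 * x * y + 2 * y * z + 2 * x * z - x ^ 2 - y ^ 2 - z ^ 2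

lemma dd_step (x y z z0 k : ℝ) (hx : 0 ≤ x) (hy : 0 ≤ y) (h0 : 0 < z0) (hz : z0 ≤ z)
    (hxy : (x - y) ^ 2 ≤ z0 ^ 2) (hk : 0 ≤ k) (h : k * dd x y z0 ≤ x * y * z0) :
    k * dd x y z ≤ x * y * z := by
  have h1 : 0 ≤ z * dd x y z0 - z0 * dd x y z := by
    have : z * dd x y z0 - z0 * dd x y z = (z - z0) * (z * z0 - (x - y) ^ 2) := by
      unfold dd; ring
    rw [this]
    exact mul_nonneg (by linarith) (by nlinarith)
  have h2 : z0 * (k * dd x y z) ≤ z0 * (x * y * z) := by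
    have hz0 : 0 ≤ z := by linarith
    nlinarith [mul_nonneg hk h1, mul_le_mul_of_nonneg_left h hz0]
  exact le_of_mul_le_mul_left h2 h0

/-- Lower bound of the circumradius for sides at least `x0, y0, z0`. -/
lemma dd_bound (x y z x0 y0 z0 k : ℝ) (hx : x0 ≤ x) (hy : y0 ≤ y) (hz : z0 ≤ z)
    (hx8 : x ≤ 8) (hy8 : y ≤ 8) (hx0 : 4 ≤ x0) (hy0 : 4 ≤ y0) (hz0 : 4 ≤ z0)
    (hz8 : z0 ≤ 8) (hk : 0 ≤ k)
    (h : k * dd x0 y0 z0 ≤ x0 * y0 * z0) : k * dd x y z ≤ x * y * z := by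
  have s1 : k * dd y0 z0 x ≤ y0 * z0 * x := by
    refine dd_step y0 z0 x x0 k (by linarith) (by linarith) (by linarith) hx ?_ hk ?_
    · have : |y0 - z0| ≤ |x0| := by
        rw [abs_of_pos (show 0 < x0 by linarith), abs_le]; constructor <;> linarith
      exact sq_le_sq.2 this
    · unfold dd at h ⊢; linarith
  have s2 : k * dd z0 x y ≤ z0 * x * y := by
    refine dd_step z0 x y y0 k (by linarith) (by linarith) (by linarith) hy ?_ hk ?_
    · have : |z0 - x| ≤ |y0| := by
        rw [abs_of_pos (show 0 < y0 by linarith), abs_le]; constructor <;> linarith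
      exact sq_le_sq.2 this
    · unfold dd at s1 ⊢; linarith
  refine dd_step x y z z0 k (by linarith) (by linarith) (by linarith) hz ?_ hk ?_
  · have : |x - y| ≤ |z0| := by
      rw [abs_of_pos (show 0 < z0 by linarith), abs_le]; constructor <;> linarith
    exact sq_le_sq.2 this
  · unfold dd at s2 ⊢; linarith

/-- The radius of a sphere through three points is at least their circumradius. -/
lemma circum_le (u v q : E3) (x y z c2 : ℝ) (hu : inner ℝ u u = x) (hv : inner ℝ v v = y)
    (huv : 2 * inner ℝ u v = x + y - z) (hqu : inner ℝ q u = x / 2) (hqv : inner ℝ q v = y / 2)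
    (hq : inner ℝ q q = c2) (hd : 0 < dd x y z) : x * y * z ≤ c2 * dd x y z := by
  set g := inner ℝ u v with hg
  have hvu : inner ℝ v u = g := by rw [real_inner_comm]
  have huq : inner ℝ u q = x / 2 := by rw [real_inner_comm, hqu]
  have hvq : inner ℝ v q = y / 2 := by rw [real_inner_comm, hqv]
  have key : 0 ≤ inner ℝ (dd x y z • q - (2 * y * (x - g)) • u - (2 * x * (y - g)) • v)
      (dd x y z • q - (2 * y * (x - g)) • u - (2 * x * (y - g)) • v) := real_inner_self_nonneg
  simp only [inner_sub_left, inner_sub_right, real_inner_smul_left, real_inner_smul_right,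
    hu, hv, hqu, hqv, huq, hvq, hvu, hq, ← hg] at key
  have hz : z = x + y - 2 * g := by linarith
  have : dd x y z * (x * y * z) ≤ dd x y z * (c2 * dd x y z) := by
    have hdd : dd x y z = 4 * (x * y - g ^ 2) := by unfold dd; rw [hz]; ring
    rw [hdd] at key ⊢
    rw [hz]
    nlinarith
  exact le_of_mul_le_mul_left this hd

/-! The main estimate, for the simplex with vertices `0, A, B, C`. -/

def Vr (A B C : E3) : Set E3 :=
  {x | x ∈ convexHull ℝ ({0, A, B, C} : Set E3) ∧ inner ℝ x A ≤ inner ℝ A A / 2 ∧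
    inner ℝ x B ≤ inner ℝ B B / 2 ∧ inner ℝ x C ≤ inner ℝ C C / 2}

lemma Vr_convex (A B C : E3) : Convex ℝ (Vr A B C) := by
  have h : ∀ A : E3, Convex ℝ {x : E3 | inner ℝ x A ≤ inner ℝ A A / 2} := by
    intro A x hx y hy s t hs ht hst
    simp only [Set.mem_ofPred_eq] at hx hy ⊢
    rw [inner_add_left, real_inner_smul_left, real_inner_smul_left]
    have : inner ℝ A A / 2 = s * (inner ℝ A A / 2) + t * (inner ℝ A A / 2) := by
      rw [← add_mul, hst, one_mul]
    rw [this]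
    gcongr
  exact (convex_convexHull ℝ _).inter ((h A).inter ((h B).inter (h C)))

lemma hull_mem (A B C : E3) (a b c : ℝ) (ha : 0 ≤ a) (hb : 0 ≤ b) (hc : 0 ≤ c)
    (hs : a + b + c ≤ 1) :
    a • A + b • B + c • C ∈ convexHull ℝ ({0, A, B, C} : Set E3) := by
  have hsum : ∑ i : Fin 4, (![1 - (a + b + c), a, b, c] i) • (![0, A, B, C] i) ∈
      convexHull ℝ ({0, A, B, C} : Set E3) := by
    apply (convex_convexHull ℝ _).sum_mem
    · intro i _
      fin_cases i <;> simp <;> linarith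
    · simp [Fin.sum_univ_four]; ring
    · intro i _
      apply subset_convexHull
      fin_cases i <;> simp
  simpa [Fin.sum_univ_four] using hsum

lemma tri_facts (xA xB xAB g : ℝ) (hA : 4 ≤ xA) (hB : 4 ≤ xB) (hAB : 4 ≤ xAB) (hA8 : xA ≤ 8)
    (hB8 : xB ≤ 8) (hAB8 : xAB ≤ 8) (hg : 2 * g = xA + xB - xAB) :
    0 ≤ g ∧ g ≤ xA ∧ g ≤ xB ∧ 0 < xA * xB - g ^ 2 ∧ dd xA xB xAB = 4 * (xA * xB - g ^ 2) := by
  have h1 : 0 ≤ g := by linarith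
  have h2 : g ≤ xA := by linarith
  have h3 : g ≤ xB := by linarith
  refine ⟨h1, h2, h3, ?_, ?_⟩
  · have e : xA * xB - g ^ 2 = (xA - g) * (xB - g) + g * xAB := by
      have : xAB = xA + xB - 2 * g := by linarith
      rw [this]; ring
    rw [e]
    have p1 := mul_nonneg (sub_nonneg.2 h2) (sub_nonneg.2 h3)
    rcases h1.eq_or_lt with h | h
    · rw [← h]; nlinarith
    · have : 0 < g * xAB := by positivity
      linarith
  · have : xAB = xA + xB - 2 * g := by linarith
    unfold dd; rw [this]; ring

set_option maxHeartbeats 4000000 in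
theorem main_vec (A B C q : E3) (la lb lc xA xB xC xAB xAC xBC : ℝ)
    (hla : 0 ≤ la) (hlb : 0 ≤ lb) (hlc : 0 ≤ lc) (hl1 : la + lb + lc ≤ 1)
    (hq : q = la • A + lb • B + lc • C)
    (hAA : inner ℝ A A = xA) (hBB : inner ℝ B B = xB) (hCC : inner ℝ C C = xC)
    (hAB : 2 * inner ℝ A B = xA + xB - xAB) (hAC : 2 * inner ℝ A C = xA + xC - xAC)
    (hBC : 2 * inner ℝ B C = xB + xC - xBC)
    (hqA : inner ℝ q A = xA / 2) (hqB : inner ℝ q B = xB / 2) (hqC : inner ℝ q C = xC / 2)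
    (A4 : 4 ≤ xA) (B4 : 4 ≤ xB) (C4 : 4 ≤ xC) (AB4 : 4 ≤ xAB) (AC6 : 6.3001 ≤ xAC) (BC4 : 4 ≤ xBC)
    (A8 : xA ≤ 8) (B8 : xB ≤ 8) (C8 : xC ≤ 8) (AB8 : xAB ≤ 8) (AC8 : xAC ≤ 8) (BC8 : xBC ≤ 8)
    (hbAB : 1.64 * dd xA xB xAB ≤ xA * xB * xAB) (hbAC : 1.64 * dd xA xC xAC ≤ xA * xC * xAC)
    (hc : 1.87 ≤ inner ℝ q q) (hd : dt A B C ≠ 0) (hfin : volume (Vr A B C) ≠ ⊤) :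
    (volume (Metric.closedBall (0 : E3) 1 ∩ cone A B C)).toReal <
      δoct * (volume (Vr A B C)).toReal := by
  have hbBC : (4 / 3) * dd xB xC xBC ≤ xB * xC * xBC :=
    dd_bound xB xC xBC 4 4 4 (4 / 3) B4 C4 BC4 B8 C8 le_rfl le_rfl le_rfl (by norm_num)
      (by norm_num) (by unfold dd; norm_num)
  obtain ⟨g1, g2, g3, g4, g5⟩ := tri_facts xA xB xAB _ A4 B4 AB4 A8 B8 AB8 hAB
  obtain ⟨k1, k2, k3, k4, k5⟩ := tri_facts xA xC xAC _ A4 C4 (by linarith) A8 C8 AC8 hAC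
  obtain ⟨m1, m2, m3, m4, m5⟩ := tri_facts xB xC xBC _ B4 C4 BC4 B8 C8 BC8 hBC
  set gAB := inner ℝ A B with hgAB
  set gAC := inner ℝ A C with hgAC
  set gBC := inner ℝ B C with hgBC
  have hBA : inner ℝ B A = gAB := by rw [real_inner_comm]
  have hCA : inner ℝ C A = gAC := by rw [real_inner_comm]
  have hCB : inner ℝ C B = gBC := by rw [real_inner_comm]
  set c2 := inner ℝ q q with hc2
  have hexp : ∀ y : E3, inner ℝ q y = la * inner ℝ A y + lb * inner ℝ B y + lc * inner ℝ C y := by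
    intro y
    rw [hq, inner_add_left, inner_add_left, real_inner_smul_left, real_inner_smul_left,
      real_inner_smul_left]
  have eA := hexp A
  have eB := hexp B
  have eC := hexp C
  have eq' : c2 = la * (xA / 2) + lb * (xB / 2) + lc * (xC / 2) := by
    have := hexp q
    rw [real_inner_comm q A, real_inner_comm q B, real_inner_comm q C, hqA, hqB, hqC] at this
    exact this
  rw [hqA, hAA, hBA, hCA] at eA
  rw [hqB, ← hgAB, hBB, hCB] at eB
  rw [hqC, ← hgAC, ← hgBC, hCC] at eC
  -- the relation seen from `C`
  have relC : la * xAC + lb * xBC + (1 - la - lb - lc) * xC = 2 * c2 := by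
    rw [eq']
    have t1 : xAC = xA + xC - 2 * gAC := by linarith
    have t2 : xBC = xB + xC - 2 * gBC := by linarith
    rw [t1, t2]
    linarith
  have hlow : la * 2.3001 ≤ 4 * lc + (2 * c2 - 4) := by
    have p1 := mul_le_mul_of_nonneg_left AC6 hla
    have p2 := mul_le_mul_of_nonneg_left BC4 hlb
    have p3 := mul_le_mul_of_nonneg_left C4 (show 0 ≤ 1 - la - lb - lc by linarith)
    linarith
  have hpos : 0 < lb + lc := by
    by_contra hcon
    have hb0 : lb = 0 := by linarith
    have hc0 : lc = 0 := by linarith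
    rw [hb0, hc0] at eA eq'
    have : la = 1 / 2 := by
      have h : xA * (la - 1 / 2) = 0 := by linarith
      rcases mul_eq_zero.1 h with h | h
      · linarith
      · linarith
    rw [this] at eq' hlow
    linarith
  -- membership in the Voronoi region
  have hX := Vr_convex A B C
  have h0X : (0 : E3) ∈ Vr A B C := by
    refine ⟨subset_convexHull ℝ _ (by simp), ?_, ?_, ?_⟩
    · rw [inner_zero_left, hAA]; linarith
    · rw [inner_zero_left, hBB]; linarith
    · rw [inner_zero_left, hCC]; linarith
  have mem : ∀ a b c : ℝ, 0 ≤ a → 0 ≤ b → 0 ≤ c → a + b + c ≤ 1 →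
      inner ℝ (a • A + b • B + c • C) A ≤ xA / 2 → inner ℝ (a • A + b • B + c • C) B ≤ xB / 2 →
      inner ℝ (a • A + b • B + c • C) C ≤ xC / 2 → a • A + b • B + c • C ∈ Vr A B C := by
    intro a b c h1 h2 h3 h4 h5 h6 h7
    exact ⟨hull_mem A B C a b c h1 h2 h3 h4, by rw [hAA]; exact h5, by rw [hBB]; exact h6,
      by rw [hCC]; exact h7⟩
  have hAX : (1 / 2 : ℝ) • A ∈ Vr A B C := by
    have h := mem (1 / 2) 0 0 (by norm_num) le_rfl le_rfl (by norm_num)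
    simp only [zero_smul, add_zero, real_inner_smul_left, hAA, ← hgAB, ← hgAC] at h
    exact h (by linarith) (by linarith) (by linarith)
  have hBX : (1 / 2 : ℝ) • B ∈ Vr A B C := by
    have h := mem 0 (1 / 2) 0 le_rfl (by norm_num) le_rfl (by norm_num)
    simp only [zero_smul, add_zero, zero_add, real_inner_smul_left, hBB, hBA, ← hgBC] at h
    exact h (by linarith) (by linarith) (by linarith)
  have hCX : (1 / 2 : ℝ) • C ∈ Vr A B C := by
    have h := mem 0 0 (1 / 2) le_rfl le_rfl (by norm_num) (by norm_num)
    simp only [zero_smul, zero_add, real_inner_smul_left, hCC, hCA, hCB] at h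
    exact h (by linarith) (by linarith) (by linarith)
  have hqX : q ∈ Vr A B C := by
    have h := mem la lb lc hla hlb hlc hl1
    rw [← hq, hqA, hqB, hqC] at h
    exact h le_rfl le_rfl le_rfl
  have fAB : ∀ μ ν : ℝ, 0 ≤ μ → 0 ≤ ν → μ + ν ≤ 1 →
      inner ℝ (μ • A + ν • B) A = xA / 2 → inner ℝ (μ • A + ν • B) B = xB / 2 →
      inner ℝ (μ • A + ν • B) C ≤ inner ℝ q C → μ • A + ν • B ∈ Vr A B C := by
    intro μ ν h1 h2 h3 h4 h5 h6
    have h := mem μ ν 0 h1 h2 le_rfl (by linarith)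
    rw [zero_smul, add_zero] at h
    exact h h4.le h5.le (by rw [← hqC]; exact h6)
  have fAC : ∀ μ ν : ℝ, 0 ≤ μ → 0 ≤ ν → μ + ν ≤ 1 →
      inner ℝ (μ • A + ν • C) A = xA / 2 → inner ℝ (μ • A + ν • C) C = xC / 2 →
      inner ℝ (μ • A + ν • C) B ≤ inner ℝ q B → μ • A + ν • C ∈ Vr A B C := by
    intro μ ν h1 h2 h3 h4 h5 h6
    have h := mem μ 0 ν h1 le_rfl h2 (by linarith)
    rw [zero_smul, add_zero] at h
    exact h h4.le (by rw [← hqB]; exact h6) h5.le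
  have fBC : ∀ μ ν : ℝ, 0 ≤ μ → 0 ≤ ν → μ + ν ≤ 1 →
      inner ℝ (μ • B + ν • C) B = xB / 2 → inner ℝ (μ • B + ν • C) C = xC / 2 →
      inner ℝ (μ • B + ν • C) A ≤ inner ℝ q A → μ • B + ν • C ∈ Vr A B C := by
    intro μ ν h1 h2 h3 h4 h5 h6
    have h := mem 0 μ ν le_rfl h1 h2 (by linarith)
    rw [zero_smul, zero_add] at h
    exact h (by rw [← hqA]; exact h6) h4.le h5.le
  -- the parameter of the bad face
  obtain ⟨γ, hγ1, hγ2, hγ3⟩ : ∃ γ : ℝ, 1 / 3 ≤ γ ∧ 1 + γ ≤ c2 ∧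
      ((γ = 0.87 ∧ c2 ≤ 2) ∨ (γ = 1 ∧ 2 < c2)) := by
    rcases le_or_gt c2 2 with h | h
    · exact ⟨0.87, by norm_num, by linarith, Or.inl ⟨rfl, h⟩⟩
    · exact ⟨1, by norm_num, by linarith, Or.inr ⟨rfl, h⟩⟩
  obtain ⟨σ1, l1, u1, b1, v1⟩ := face_bound A B C q la lb lc xA xB gAB (Vr A B C) 0.64 0.87 hlc hq
    hAA hBB rfl hqA hqB A4 B4 g1 g2 g3 g4 (by norm_num) (by norm_num)
    (by rw [g5] at hbAB
        have : xAB = xA + xB - 2 * gAB := by linarith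
        rw [← this]; norm_num at hbAB ⊢; linarith)
    (by rw [← hc2]; linarith) hX h0X hAX hBX hqX fAB
  obtain ⟨σ2, l2, u2, b2, v2⟩ := face_bound A C B q la lc lb xA xC gAC (Vr A B C) 0.64 0.87 hlb
    (by rw [hq]; module)
    hAA hCC rfl hqA hqC A4 C4 k1 k2 k3 k4 (by norm_num) (by norm_num)
    (by rw [k5] at hbAC
        have : xAC = xA + xC - 2 * gAC := by linarith
        rw [← this]; norm_num at hbAC ⊢; linarith)
    (by rw [← hc2]; linarith) hX h0X hAX hCX hqX fAC
  obtain ⟨σ3, l3, u3, b3, v3⟩ := face_bound B C A q lb lc la xB xC gBC (Vr A B C) (1 / 3) γ hla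
    (by rw [hq]; module)
    hBB hCC rfl hqB hqC B4 C4 m1 m2 m3 m4 (by norm_num) hγ1
    (by rw [m5] at hbBC
        have : xBC = xB + xC - 2 * gBC := by linarith
        rw [← this]; norm_num at hbBC ⊢; linarith)
    (by rw [← hc2]; linarith) hX h0X hBX hCX hqX fBC
  have dAC : |dt A C B| = |dt A B C| := by
    have : dt A C B = - dt A B C := by rw [dt_eq, dt_eq]; ring
    rw [this, abs_neg]
  have dBC : |dt B C A| = |dt A B C| := by
    have : dt B C A = dt A B C := by rw [dt_eq, dt_eq]; ring
    rw [this]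
  rw [dAC] at b2 v2
  rw [dBC] at b3 v3
  set W := |dt A B C| with hW
  have hWpos : 0 < W := abs_pos.2 hd
  have hJg := J_nonneg 0.64 0.87 (by norm_num) (by norm_num)
  have hJo := J_nonneg (1 / 3) 1 (by norm_num) (by norm_num)
  have hJb := J_nonneg (1 / 3) γ (by norm_num) (by linarith)
  have hJlt := Jg_lt
  have hJble := Jb_le
  have hδ := J_oct
  set Jg := J 0.64 0.87
  set Jo := J (1 / 3) 1 with hJo_def
  set Jb := J (1 / 3) γ with hJb_def
  have up : (volume (Metric.closedBall (0 : E3) 1 ∩ cone A B C)).toReal ≤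
      W * (lc * σ1 * Jg + lb * σ2 * Jg + la * σ3 * Jb) / 6 := by
    apply ENNReal.toReal_le_of_le_ofReal (by positivity)
    rw [cone_split3 _ measurableSet_closedBall.nullMeasurableSet A B C q la lb lc hla hlb hlc hpos hq]
    refine le_trans (add_le_add (add_le_add b1 b2) b3) ?_
    rw [← ENNReal.ofReal_add (by positivity) (by positivity),
      ← ENNReal.ofReal_add (by positivity) (by positivity)]
    apply le_of_eq
    congr 1; ring
  have lo : W * (lc * σ1 + lb * σ2 + la * σ3) / 12 ≤ (volume (Vr A B C)).toReal := by
    rw [← ENNReal.ofReal_le_iff_le_toReal hfin]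
    refine le_trans ?_ (measure_mono (Set.inter_subset_left (s := Vr A B C) (t := cone A B C)))
    rw [cone_split3 _ (hX.nullMeasurableSet volume) A B C q la lb lc hla hlb hlc hpos hq]
    refine le_trans ?_ (add_le_add (add_le_add v1 v2) v3)
    rw [← ENNReal.ofReal_add (by positivity) (by positivity),
      ← ENNReal.ofReal_add (by positivity) (by positivity)]
    apply le_of_eq
    congr 1; ring
  refine lt_of_le_of_lt up (lt_of_lt_of_le ?_ (mul_le_mul_of_nonneg_left lo (by rw [hδ]; positivity)))
  rw [hδ]
  have hfinal : la * σ3 * (Jb - Jo) < (lc * σ1 + lb * σ2) * (Jo - Jg) := by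
    have hG : 0 < Jo - Jg := by linarith
    have hgood : (lc + lb) / 2 * (Jo - Jg) ≤ (lc * σ1 + lb * σ2) * (Jo - Jg) := by
      apply mul_le_mul_of_nonneg_right _ hG.le
      linarith [mul_le_mul_of_nonneg_left l1 hlc, mul_le_mul_of_nonneg_left l2 hlb]
    refine lt_of_lt_of_le ?_ hgood
    have hgpos : 0 < (lc + lb) / 2 * (Jo - Jg) := by
      apply mul_pos _ hG; linarith
    rcases hγ3 with ⟨h1, h2⟩ | ⟨h1, h2⟩
    · rw [hJb_def, h1]
      have hbad : J (1 / 3) 0.87 - Jo ≤ 0.2875 * (Jo - Jg) := by linarith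
      have hσ : 0 ≤ la * σ3 := by positivity
      have s1 : la * σ3 * (J (1 / 3) 0.87 - Jo) ≤ la * σ3 * (0.2875 * (Jo - Jg)) :=
        mul_le_mul_of_nonneg_left hbad hσ
      have s2 : la * σ3 ≤ la := mul_le_of_le_one_right hla u3
      have s3 : la * σ3 * (0.2875 * (Jo - Jg)) ≤ la * (0.2875 * (Jo - Jg)) :=
        mul_le_mul_of_nonneg_right s2 (by positivity)
      have s4 : la * 0.2875 < (lc + lb) / 2 := by
        linarith
      have s5 := mul_lt_mul_of_pos_right s4 hG
      linarith
    · have : Jb = Jo := by rw [hJb_def, hJo_def, h1]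
      rw [this, sub_self, mul_zero]
      exact hgpos
  linarith [mul_lt_mul_of_pos_left hfinal hWpos]

/-! Transfer to the simplex with vertices `p₀, p₁, p₂, p₃`. -/

lemma inner_dist (P Q R : E3) :
    2 * inner ℝ (Q - P) (R - P) = dist P Q ^ 2 + dist P R ^ 2 - dist Q R ^ 2 := by
  have h : Q - R = (Q - P) - (R - P) := by abel
  rw [dist_comm P Q, dist_comm P R, dist_eq_norm, dist_eq_norm, dist_eq_norm, h,
    norm_sub_sq_real (Q - P) (R - P)]
  ring

lemma inner_self_dist (P Q : E3) : inner ℝ (Q - P) (Q - P) = dist P Q ^ 2 := by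
  rw [dist_comm, dist_eq_norm, real_inner_self_eq_norm_sq]

lemma inner_circ (P Q c : E3) (h : dist c P = dist c Q) :
    inner ℝ (c - P) (Q - P) = dist P Q ^ 2 / 2 := by
  have := inner_dist P c Q
  rw [dist_comm P c, h] at this
  linarith

lemma sphere_le (P Q R c : E3) (k : ℝ) (h1 : dist c P = dist c Q) (h2 : dist c P = dist c R)
    (x4 : 4 ≤ dist P Q ^ 2) (y4 : 4 ≤ dist P R ^ 2) (z4 : 4 ≤ dist Q R ^ 2)
    (x8 : dist P Q ^ 2 ≤ 8) (y8 : dist P R ^ 2 ≤ 8) (z8 : dist Q R ^ 2 ≤ 8)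
    (hk : k * dd (dist P Q ^ 2) (dist P R ^ 2) (dist Q R ^ 2) ≤
      dist P Q ^ 2 * dist P R ^ 2 * dist Q R ^ 2) : k ≤ dist c P ^ 2 := by
  obtain ⟨-, -, -, g4, g5⟩ := tri_facts _ _ _ _ x4 y4 z4 x8 y8 z8 (inner_dist P Q R)
  have hd : 0 < dd (dist P Q ^ 2) (dist P R ^ 2) (dist Q R ^ 2) := by rw [g5]; linarith
  have h := circum_le (Q - P) (R - P) (c - P) _ _ _ _ (inner_self_dist P Q) (inner_self_dist P R)
    (inner_dist P Q R) (inner_circ P Q c h1) (inner_circ P R c h2) rfl hd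
  rw [inner_self_dist, dist_comm P c] at h
  exact le_of_mul_le_mul_right (hk.trans h) hd

lemma dt_ne (p₀ pA pB pC : E3) (h : AffineIndependent ℝ ![p₀, pA, pB, pC]) :
    dt (pA - p₀) (pB - p₀) (pC - p₀) ≠ 0 := by
  intro h0
  obtain ⟨t, ht, hne⟩ := (Submodule.ne_bot_iff _).1 (LinearMap.det_eq_zero_iff_ker_ne_bot.1 h0)
  rw [LinearMap.mem_ker, Lm_apply] at ht
  rw [affineIndependent_iff] at h
  have h1 := h Finset.univ ![-(t 0 + t 1 + t 2), t 0, t 1, t 2]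
    (by simp [Fin.sum_univ_four]; ring)
    (by
      simp only [Fin.sum_univ_four, Matrix.cons_val]
      rw [← ht]; module)
  apply hne
  ext i
  fin_cases i
  · simpa using h1 1 (Finset.mem_univ _)
  · simpa using h1 2 (Finset.mem_univ _)
  · simpa using h1 3 (Finset.mem_univ _)

lemma hull_coef (p₀ pA pB pC x : E3)
    (hx : x ∈ convexHull ℝ ({p₀, pA, pB, pC} : Set E3)) :
    ∃ a b c : ℝ, 0 ≤ a ∧ 0 ≤ b ∧ 0 ≤ c ∧ a + b + c ≤ 1 ∧
      x - p₀ = a • (pA - p₀) + b • (pB - p₀) + c • (pC - p₀) := by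
  have hconv : Convex ℝ {x : E3 | ∃ a b c : ℝ, 0 ≤ a ∧ 0 ≤ b ∧ 0 ≤ c ∧ a + b + c ≤ 1 ∧
      x - p₀ = a • (pA - p₀) + b • (pB - p₀) + c • (pC - p₀)} := by
    rintro x ⟨a, b, c, ha, hb, hc, hs, hx⟩ y ⟨a', b', c', ha', hb', hc', hs', hy⟩ s t h1 h2 h3
    refine ⟨s * a + t * a', s * b + t * b', s * c + t * c', by positivity, by positivity,
      by positivity, ?_, ?_⟩
    · nlinarith [mul_le_mul_of_nonneg_left hs h1, mul_le_mul_of_nonneg_left hs' h2]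
    · have e : s • x + t • y - p₀ = s • (x - p₀) + t • (y - p₀) := by
        have : p₀ = (s + t) • p₀ := by rw [h3, one_smul]
        nth_rewrite 1 [this]
        module
      rw [e, hx, hy]; module
  refine convexHull_min ?_ hconv hx
  intro y hy
  simp only [Set.mem_insert_iff, Set.mem_singleton_iff] at hy
  rcases hy with rfl | rfl | rfl | rfl
  · exact ⟨0, 0, 0, le_rfl, le_rfl, le_rfl, by norm_num, by module⟩
  · exact ⟨1, 0, 0, by norm_num, le_rfl, le_rfl, by norm_num, by module⟩
  · exact ⟨0, 1, 0, le_rfl, by norm_num, le_rfl, by norm_num, by module⟩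
  · exact ⟨0, 0, 1, le_rfl, le_rfl, by norm_num, by norm_num, by module⟩

lemma hull_trans (p₀ pA pB pC x : E3)
    (hx : x ∈ convexHull ℝ ({0, pA - p₀, pB - p₀, pC - p₀} : Set E3)) :
    p₀ + x ∈ convexHull ℝ ({p₀, pA, pB, pC} : Set E3) := by
  have hconv := (convex_convexHull ℝ ({p₀, pA, pB, pC} : Set E3)).translate_preimage_right p₀
  refine convexHull_min ?_ hconv hx
  intro y hy
  apply subset_convexHull
  simp only [Set.mem_insert_iff, Set.mem_singleton_iff] at hy ⊢
  rcases hy with rfl | rfl | rfl | rfl <;> simp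

lemma vor_key (p₀ pA pB pC : E3) (hd : dt (pA - p₀) (pB - p₀) (pC - p₀) ≠ 0)
    (hcc : ContainsCircumcenter p₀ pA pB pC)
    (A4 : 4 ≤ dist p₀ pA ^ 2) (B4 : 4 ≤ dist p₀ pB ^ 2) (C4 : 4 ≤ dist p₀ pC ^ 2)
    (AB4 : 4 ≤ dist pA pB ^ 2) (AC6 : 6.3001 ≤ dist pA pC ^ 2) (BC4 : 4 ≤ dist pB pC ^ 2)
    (A8 : dist p₀ pA ^ 2 ≤ 8) (B8 : dist p₀ pB ^ 2 ≤ 8) (C8 : dist p₀ pC ^ 2 ≤ 8)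
    (AB8 : dist pA pB ^ 2 ≤ 8) (AC8 : dist pA pC ^ 2 ≤ 8) (BC8 : dist pB pC ^ 2 ≤ 8)
    (hbAB : 1.64 * dd (dist p₀ pA ^ 2) (dist p₀ pB ^ 2) (dist pA pB ^ 2) ≤
      dist p₀ pA ^ 2 * dist p₀ pB ^ 2 * dist pA pB ^ 2)
    (hbAC : 1.64 * dd (dist p₀ pA ^ 2) (dist p₀ pC ^ 2) (dist pA pC ^ 2) ≤
      dist p₀ pA ^ 2 * dist p₀ pC ^ 2 * dist pA pC ^ 2)
    (hr : ∀ c : E3, dist c p₀ = dist c pA → dist c p₀ = dist c pB → dist c p₀ = dist c pC →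
      1.87 ≤ dist c p₀ ^ 2) :
    vor p₀ pA pB pC < 0 := by
  obtain ⟨c, hc, e1, e2, e3⟩ := hcc
  obtain ⟨la, lb, lc, hla, hlb, hlc, hl1, hq⟩ := hull_coef p₀ pA pB pC c hc
  set V : Set E3 := {x ∈ convexHull ℝ ({p₀, pA, pB, pC} : Set E3) |
        dist x p₀ ≤ dist x pA ∧ dist x p₀ ≤ dist x pB ∧ dist x p₀ ≤ dist x pC} with hV
  set K : Set E3 := Metric.closedBall p₀ 1 ∩
        {y : E3 | ∃ x ∈ convexHull ℝ ({p₀, pA, pB, pC} : Set E3), ∃ t : ℝ, 0 ≤ t ∧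
          y = p₀ + t • (x - p₀)} with hK
  have hVfin : volume V ≠ ⊤ := by
    have hcomp : IsCompact (convexHull ℝ ({p₀, pA, pB, pC} : Set E3)) :=
      (Set.toFinite _).isCompact_convexHull ℝ
    exact ne_top_of_le_ne_top hcomp.measure_ne_top (measure_mono fun x hx => hx.1)
  have hVle : volume (Vr (pA - p₀) (pB - p₀) (pC - p₀)) ≤ volume V := by
    rw [← measure_preimage_add volume p₀ V]
    refine measure_mono ?_
    rintro x ⟨hx, i1, i2, i3⟩
    have hdist : ∀ P : E3, inner ℝ x (P - p₀) ≤ inner ℝ (P - p₀) (P - p₀) / 2 →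
        dist (p₀ + x) p₀ ≤ dist (p₀ + x) P := by
      intro P h
      have h1 := inner_dist p₀ (p₀ + x) P
      rw [inner_self_dist] at h
      rw [add_sub_cancel_left, dist_comm p₀ (p₀ + x)] at h1
      refine (sq_le_sq₀ dist_nonneg dist_nonneg).1 ?_
      linarith
    exact ⟨hull_trans p₀ pA pB pC x hx, hdist _ i1, hdist _ i2, hdist _ i3⟩
  have hKle : volume K ≤
      volume (Metric.closedBall (0 : E3) 1 ∩ cone (pA - p₀) (pB - p₀) (pC - p₀)) := by
    rw [← measure_preimage_add volume p₀ K]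
    refine measure_mono ?_
    rintro x ⟨hx, y, hy, t, ht, hxy⟩
    refine ⟨?_, ?_⟩
    · rw [Metric.mem_closedBall, dist_eq_norm, add_sub_cancel_left] at hx
      rwa [mem_closedBall_zero_iff]
    · obtain ⟨a, b, d, h1, h2, h3, -, h4⟩ := hull_coef p₀ pA pB pC y hy
      refine ⟨t * a, t * b, t * d, by positivity, by positivity, by positivity, ?_⟩
      have : x = t • (y - p₀) := add_left_cancel hxy
      rw [this, h4]; module
  have hfin : volume (Vr (pA - p₀) (pB - p₀) (pC - p₀)) ≠ ⊤ := ne_top_of_le_ne_top hVfin hVle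
  have hBfin : volume (Metric.closedBall (0 : E3) 1 ∩ cone (pA - p₀) (pB - p₀) (pC - p₀)) ≠ ⊤ :=
    ne_top_of_le_ne_top (measure_closedBall_lt_top (x := (0 : E3)) (r := 1)).ne
      (measure_mono Set.inter_subset_left)
  have main := main_vec (pA - p₀) (pB - p₀) (pC - p₀) (c - p₀) la lb lc _ _ _ _ _ _
    hla hlb hlc hl1 hq (inner_self_dist _ _) (inner_self_dist _ _) (inner_self_dist _ _)
    (inner_dist _ _ _) (inner_dist _ _ _) (inner_dist _ _ _)
    (inner_circ _ _ _ e1) (inner_circ _ _ _ e2) (inner_circ _ _ _ e3)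
    A4 B4 C4 AB4 AC6 BC4 A8 B8 C8 AB8 AC8 BC8 hbAB hbAC
    (by rw [inner_self_dist, dist_comm]; exact hr c e1 e2 e3) hd hfin
  have hδ : 0 ≤ δoct := by
    rw [J_oct]
    have := J_nonneg (1 / 3) 1 (by norm_num) (by norm_num)
    linarith
  have h1 := ENNReal.toReal_mono hBfin hKle
  have h2 := mul_le_mul_of_nonneg_left (ENNReal.toReal_mono hVfin hVle) hδ
  unfold vor
  rw [← hV, ← hK]
  linarith

lemma vor_swap (p₀ p₁ p₂ p₃ : E3) : vor p₀ p₁ p₂ p₃ = vor p₀ p₃ p₂ p₁ := by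
  have hs : ({p₀, p₁, p₂, p₃} : Set E3) = {p₀, p₃, p₂, p₁} := by
    ext x; simp only [Set.mem_insert_iff, Set.mem_singleton_iff]; tauto
  have hV : {x ∈ convexHull ℝ ({p₀, p₃, p₂, p₁} : Set E3) |
        dist x p₀ ≤ dist x p₁ ∧ dist x p₀ ≤ dist x p₂ ∧ dist x p₀ ≤ dist x p₃} =
      {x ∈ convexHull ℝ ({p₀, p₃, p₂, p₁} : Set E3) |
        dist x p₀ ≤ dist x p₃ ∧ dist x p₀ ≤ dist x p₂ ∧ dist x p₀ ≤ dist x p₁} := by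
    ext x
    constructor
    · rintro ⟨h, h1, h2, h3⟩
      exact ⟨h, h3, h2, h1⟩
    · rintro ⟨h, h1, h2, h3⟩
      exact ⟨h, h3, h2, h1⟩
  unfold vor
  rw [hs, hV]

lemma long_sq (y : ℝ) (h : y ∈ Set.Icc (2.51 : ℝ) (2 * Real.sqrt 2)) :
    6.3001 ≤ y ^ 2 ∧ y ^ 2 ≤ 8 := by
  have h2 := Real.sq_sqrt (show (0 : ℝ) ≤ 2 by norm_num)
  obtain ⟨h3, h4⟩ := h
  have h5 := Real.sqrt_nonneg 2
  constructor <;> nlinarith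

lemma short_sq (y : ℝ) (h : y ∈ Set.Icc (2 : ℝ) 2.51) : 4 ≤ y ^ 2 ∧ y ^ 2 ≤ 8 := by
  obtain ⟨h3, h4⟩ := h
  constructor <;> nlinarith

/-- One long side. -/
lemma dd_one (x y z : ℝ) (hx : 6.3001 ≤ x) (hy : 4 ≤ y) (hz : 4 ≤ z) (hx8 : x ≤ 8)
    (hy8 : y ≤ 8) : 1.64 * dd x y z ≤ x * y * z :=
  dd_bound x y z 6.3001 4 4 1.64 hx hy hz hx8 hy8 (by norm_num) le_rfl le_rfl (by norm_num)
    (by norm_num) (by unfold dd; norm_num)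

/-- Two long sides. -/
lemma dd_two (x y z : ℝ) (hx : 6.3001 ≤ x) (hy : 6.3001 ≤ y) (hz : 4 ≤ z) (hx8 : x ≤ 8)
    (hy8 : y ≤ 8) : 1.87 * dd x y z ≤ x * y * z :=
  dd_bound x y z 6.3001 6.3001 4 1.87 hx hy hz hx8 hy8 (by norm_num) (by norm_num) le_rfl
    (by norm_num) (by norm_num) (by unfold dd; norm_num)

lemma dd_comm23 (x y z : ℝ) : dd x y z = dd x z y := by unfold dd; ring

lemma dd_rot (x y z : ℝ) : dd x y z = dd z x y := by unfold dd; ring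

lemma eta_contra (a b c : ℝ) (ha : 0 ≤ a) (hb : 0 ≤ b) (hc : 0 ≤ c)
    (hx : 6.3001 ≤ a ^ 2) (hy : 6.3001 ≤ b ^ 2) (hz : 6.3001 ≤ c ^ 2)
    (hx8 : a ^ 2 ≤ 8) (hy8 : b ^ 2 ≤ 8) (hz8 : c ^ 2 ≤ 8) : ¬ eta a b c ≤ Real.sqrt 2 := by
  intro h
  have hk := dd_bound (a ^ 2) (b ^ 2) (c ^ 2) 6.3001 6.3001 6.3001 2.1 hx hy hz hx8 hy8
    (by norm_num) (by norm_num) (by norm_num) (by norm_num) (by norm_num)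
    (by unfold dd; norm_num)
  obtain ⟨-, -, -, g4, g5⟩ := tri_facts (a ^ 2) (b ^ 2) (c ^ 2) ((a ^ 2 + b ^ 2 - c ^ 2) / 2)
    (by linarith) (by linarith) (by linarith) hx8 hy8 hz8 (by ring)
  have e : (a + b + c) * (b + c - a) * (a + c - b) * (a + b - c) =
      dd (a ^ 2) (b ^ 2) (c ^ 2) := by unfold dd; ring
  have hD : 0 < dd (a ^ 2) (b ^ 2) (c ^ 2) := by rw [g5]; linarith
  unfold eta at h
  rw [e, div_le_iff₀ (Real.sqrt_pos.2 hD)] at h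
  have h1 := pow_le_pow_left₀ (by positivity) h 2
  rw [mul_pow (Real.sqrt 2), Real.sq_sqrt (by norm_num), Real.sq_sqrt hD.le] at h1
  nlinarith

/-- Calculation 4.5.2, cells (8)–(11): Voronoi scoring of small simplices with several
long edges is negative. -/
theorem vor_neg_several_long_edges (p₀ p₁ p₂ p₃ : E3)
    (hindep : AffineIndependent ℝ ![p₀, p₁, p₂, p₃])
    (hsmall : IsSmall p₀ p₁ p₂ p₃)
    (hcc : ContainsCircumcenter p₀ p₁ p₂ p₃)
    (hcase : (dist p₀ p₁ ∈ Set.Icc (2.51 : ℝ) (2 * Real.sqrt 2) ∧ dist p₁ p₃ ∈ Set.Icc (2.51 : ℝ) (2 * Real.sqrt 2) ∧ dist p₀ p₂ ∈ Set.Icc (2 : ℝ) (2.51) ∧ dist p₀ p₃ ∈ Set.Icc (2 : ℝ) (2.51) ∧ dist p₂ p₃ ∈ Set.Icc (2 : ℝ) (2.51) ∧ dist p₁ p₂ ∈ Set.Icc (2 : ℝ) (2.51)) ∨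
      (dist p₀ p₁ ∈ Set.Icc (2.51 : ℝ) (2 * Real.sqrt 2) ∧ dist p₁ p₃ ∈ Set.Icc (2.51 : ℝ) (2 * Real.sqrt 2) ∧ dist p₁ p₂ ∈ Set.Icc (2.51 : ℝ) (2 * Real.sqrt 2) ∧ dist p₀ p₂ ∈ Set.Icc (2 : ℝ) (2.51) ∧ dist p₀ p₃ ∈ Set.Icc (2 : ℝ) (2.51) ∧ dist p₂ p₃ ∈ Set.Icc (2 : ℝ) (2.51)) ∨
      (dist p₂ p₃ ∈ Set.Icc (2.51 : ℝ) (2 * Real.sqrt 2) ∧ dist p₁ p₃ ∈ Set.Icc (2.51 : ℝ) (2 * Real.sqrt 2) ∧ dist p₀ p₁ ∈ Set.Icc (2 : ℝ) (2.51) ∧ dist p₀ p₂ ∈ Set.Icc (2 : ℝ) (2.51) ∧ dist p₀ p₃ ∈ Set.Icc (2 : ℝ) (2.51) ∧ dist p₁ p₂ ∈ Set.Icc (2 : ℝ) (2.51)) ∨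
      (dist p₂ p₃ ∈ Set.Icc (2.51 : ℝ) (2 * Real.sqrt 2) ∧ dist p₁ p₃ ∈ Set.Icc (2.51 : ℝ) (2 * Real.sqrt 2) ∧ dist p₁ p₂ ∈ Set.Icc (2.51 : ℝ) (2 * Real.sqrt 2) ∧ dist p₀ p₁ ∈ Set.Icc (2 : ℝ) (2.51) ∧ dist p₀ p₂ ∈ Set.Icc (2 : ℝ) (2.51) ∧ dist p₀ p₃ ∈ Set.Icc (2 : ℝ) (2.51))) :
    vor p₀ p₁ p₂ p₃ < 0 := by
  have hdt := dt_ne p₀ p₁ p₂ p₃ hindep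
  have hcase12 : dist p₀ p₁ ∈ Set.Icc (2.51 : ℝ) (2 * Real.sqrt 2) →
      dist p₁ p₃ ∈ Set.Icc (2.51 : ℝ) (2 * Real.sqrt 2) →
      4 ≤ dist p₁ p₂ ^ 2 → dist p₁ p₂ ^ 2 ≤ 8 → dist p₀ p₂ ∈ Set.Icc (2 : ℝ) 2.51 →
      dist p₀ p₃ ∈ Set.Icc (2 : ℝ) 2.51 → dist p₂ p₃ ∈ Set.Icc (2 : ℝ) 2.51 →
      vor p₀ p₁ p₂ p₃ < 0 := by
    intro h1 h5 l6 u6 h2 h3 h4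
    obtain ⟨l1, u1⟩ := long_sq _ h1
    obtain ⟨l5, u5⟩ := long_sq _ h5
    obtain ⟨l2, u2⟩ := short_sq _ h2
    obtain ⟨l3, u3⟩ := short_sq _ h3
    obtain ⟨l4, u4⟩ := short_sq _ h4
    refine vor_key p₀ p₁ p₂ p₃ hdt hcc (by linarith) l2 l3 l6 l5 l4 u1 u2 u3 u6 u5 u4
      (dd_one _ _ _ l1 l2 l6 u1 u2) (dd_one _ _ _ l1 l3 (by linarith) u1 u3) ?_
    intro c e1 _ e3
    refine sphere_le p₀ p₁ p₃ c 1.87 e1 e3 (by linarith) l3 (by linarith) u1 u3 u5 ?_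
    have := dd_two _ _ _ l1 l5 l3 u1 u5
    rw [dd_comm23] at this
    linarith
  rcases hcase with ⟨h1, h5, h2, h3, h4, h6⟩ | ⟨h1, h5, h6, h2, h3, h4⟩ |
    ⟨h4, h5, h1, h2, h3, h6⟩ | ⟨h4, h5, h6, -, -, -⟩
  · obtain ⟨l6, u6⟩ := short_sq _ h6
    exact hcase12 h1 h5 l6 u6 h2 h3 h4
  · obtain ⟨l6, u6⟩ := long_sq _ h6
    exact hcase12 h1 h5 (by linarith) u6 h2 h3 h4
  · obtain ⟨l4, u4⟩ := long_sq _ h4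
    obtain ⟨l5, u5⟩ := long_sq _ h5
    obtain ⟨l1, u1⟩ := short_sq _ h1
    obtain ⟨l2, u2⟩ := short_sq _ h2
    obtain ⟨l3, u3⟩ := short_sq _ h3
    obtain ⟨l6, u6⟩ := short_sq _ h6
    rw [vor_swap]
    have hdt' : dt (p₃ - p₀) (p₂ - p₀) (p₁ - p₀) ≠ 0 := by
      have : dt (p₃ - p₀) (p₂ - p₀) (p₁ - p₀) = - dt (p₁ - p₀) (p₂ - p₀) (p₃ - p₀) := by
        rw [dt_eq, dt_eq]; ring
      rw [this]
      exact neg_ne_zero.2 hdt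
    have hcc' : ContainsCircumcenter p₀ p₃ p₂ p₁ := by
      obtain ⟨c, hc, e1, e2, e3⟩ := hcc
      refine ⟨c, ?_, e3, e2, e1⟩
      have hs : ({p₀, p₃, p₂, p₁} : Set E3) = {p₀, p₁, p₂, p₃} := by
        ext x; simp only [Set.mem_insert_iff, Set.mem_singleton_iff]; tauto
      rw [hs]; exact hc
    rw [dist_comm p₂ p₃] at l4 u4
    rw [dist_comm p₁ p₃] at l5 u5
    rw [dist_comm p₁ p₂] at l6 u6
    refine vor_key p₀ p₃ p₂ p₁ hdt' hcc' l3 l2 l1 (by linarith) l5 l6 u3 u2 u1 u4 u5 u6 ?_ ?_ ?_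
    · have := dd_one _ _ _ l4 l3 l2 u4 u3
      rw [← dd_rot] at this
      linarith
    · have := dd_one _ _ _ l5 l3 l1 u5 u3
      rw [← dd_rot] at this
      linarith
    · intro c e3 e2 e1
      rw [e3]
      exact sphere_le p₃ p₂ p₁ c 1.87 (by rw [← e3, e2]) (by rw [← e3, e1]) (by linarith)
        (by linarith) l6 u4 u5 u6 (dd_two _ _ _ l4 l5 l6 u4 u5)
  · obtain ⟨l4, u4⟩ := long_sq _ h4
    obtain ⟨l5, u5⟩ := long_sq _ h5
    obtain ⟨l6, u6⟩ := long_sq _ h6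
    exact absurd hsmall.2.2.2.2
      (eta_contra _ _ _ dist_nonneg dist_nonneg dist_nonneg l6 l5 l4 u6 u5 u4)
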